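/- arXiv:2410.07098 — 2 statements merged into one kernel-verified Lean document; each statement's English description precedes it below -/
import Mathlib

section
/- For every ε > 0 there exists c > 0 such that the following holds for all sufficiently large n. Let G be an ordered graph on n vertices containing no induced monotone path P_7. If the complement Ḡ of G contains at least ε·n⁵ copies of K_5, then Ḡ contains the complete bipartite graph K_2[t] with t = ⌈c·n/log n⌉. -/
/-- The number of `r`-element vertex subsets of `G` inducing a complete subgraph
(copies of `K_r`). -/
noncomputable def cliqueCount {V : Type*} [Fintype V] (G : SimpleGraph V) (r : ℕ) : ℕ :=
  Set.ncard {s : Finset V | s.card = r ∧ G.IsClique (s : Set V)}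

/-- `G` contains `K_r[t]`: `r` pairwise disjoint vertex sets of size `t` with all
pairs of vertices from distinct sets adjacent. -/
def ContainsBlowup {V : Type*} (G : SimpleGraph V) (r t : ℕ) : Prop :=
  ∃ A : Fin r → Finset V,
    (∀ i, (A i).card = t) ∧
    (∀ i j, i ≠ j → Disjoint (A i) (A j)) ∧
    (∀ i j, i ≠ j → ∀ x ∈ A i, ∀ y ∈ A j, G.Adj x y)

/-- The ordered graph `G` on `Fin n` contains an induced monotone path with `m`
vertices: `v 0 < v 1 < ⋯ < v (m-1)` with adjacency exactly between consecutive
vertices. -/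
def HasIndMonPath {n : ℕ} (G : SimpleGraph (Fin n)) (m : ℕ) : Prop :=
  ∃ v : Fin m → Fin n, StrictMono v ∧
    ∀ i j : Fin m, G.Adj (v i) (v j) ↔ ((i : ℕ) + 1 = (j : ℕ) ∨ (j : ℕ) + 1 = (i : ℕ))

/-!
Suppose that `G` has no induced monotone path `P_7`, that the complement has no large biclique, and
that there are five zones, one after the other in the vertex order, with a positive density of
independent transversals. By downward induction on `S`, some pair of zones in any given set `S`
spans a positive density of edges; for `S = ∅` this says that there are no such zones.

In the inductive step all pairs in `S` may be assumed sparse, while adding a pair to `S` makes some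
pair dense, whichever dense subfamily of the zones is considered. A path is grown from left to right
so that its next vertex ranges over a dense set and its earlier vertices have no neighbours in the
later zones. If `(i, j) ∉ S`, applying the induction hypothesis to the zones of vertices that can be
exchanged in a typical transversal makes the pair `(i, j)` dense there, so some edge from zone `i`
to zone `j` is compatible with a positive density of transversals and lengthens the path by two
vertices. If a pair is in `S`, typical vertices have few neighbours across it, so the path can visit
the second zone twice, since a dense set contains many vertices with many later neighbours in it.
Among five zones there are always four, possibly after reversing the order, for which these moves
produce seven vertices.

If the complement has many copies of `K_5`, cutting the order into boundedly many intervals and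
pigeonholing yields such zones.
-/

open scoped BigOperators

section Density

variable {α β κ : Type*} [Fintype α] [Fintype β] {δ δ' : ℝ}

/-- The density of a subset of a finite type, that is, its uniform probability. It is `0` on the
empty type. -/
noncomputable def density (s : Set α) : ℝ :=
  s.ncard / Fintype.card α

theorem density_eq_expect (s : Set α) : density s = 𝔼 x, s.indicator 1 x := by
  classical
  simp [density, Fintype.expect_eq_sum_div_card, Set.indicator_apply, Set.ncard_eq_toFinset_card']

theorem density_nonneg (s : Set α) : 0 ≤ density s := by
  unfold density; positivity

theorem density_mono {s t : Set α} (h : s ⊆ t) : density s ≤ density t := by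
  unfold density
  gcongr
  exact Set.toFinite t

theorem density_le_one (s : Set α) : density s ≤ 1 := by
  refine div_le_one_of_le₀ ?_ (by positivity)
  exact_mod_cast (Set.ncard_le_card s).trans_eq Nat.card_eq_fintype_card

theorem nonempty_of_density_pos {s : Set α} (h : 0 < density s) : s.Nonempty := by
  contrapose! h
  simp [density, h]

theorem density_mul_card (s : Set α) : density s * Fintype.card α = s.ncard := by
  rcases isEmpty_or_nonempty α with _ | _
  · simp [Set.eq_empty_of_isEmpty s]
  · rw [density, div_mul_cancel₀ _ (by positivity)]

theorem density_union_le (s t : Set α) : density (s ∪ t) ≤ density s + density t := by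
  rw [density, density, density, ← add_div]
  gcongr
  exact_mod_cast Set.ncard_union_le s t

theorem density_iUnion_le [Fintype κ] (s : κ → Set α) :
    density (⋃ k, s k) ≤ ∑ k, density (s k) := by
  simp only [density, ← Finset.sum_div]
  gcongr
  exact_mod_cast Set.ncard_iUnion_le_of_fintype s

theorem density_sub_le_density_sdiff (s t : Set α) : density s - density t ≤ density (s \ t) := by
  linarith [density_union_le (s \ t) t, density_mono (show s ⊆ s \ t ∪ t by simp)]

theorem density_sub_density_inter_le (s t : Set α) :
    density s - density (s ∩ t) ≤ density (s \ t) := by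
  simpa using density_sub_le_density_sdiff s (s ∩ t)

theorem le_density_sdiff {s s' t : Set α} (hs : s ⊆ s') (ht : density (s' ∩ t) ≤ δ)
    (h : δ' + δ ≤ density s) : δ' ≤ density (s \ t) := by
  linarith [density_sub_density_inter_le s t, density_mono (Set.inter_subset_inter_left t hs)]

theorem exists_le_density_inter_fiber [Fintype κ] [Nonempty κ] (f : α → κ) (s : Set α) :
    ∃ z, density s / Fintype.card κ ≤ density (s ∩ f ⁻¹' {z}) := by
  by_contra! h
  have hsum := density_iUnion_le fun z => s ∩ f ⁻¹' {z}
  rw [← Set.inter_iUnion, ← Set.preimage_iUnion, Set.iUnion_of_singleton, Set.preimage_univ,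
    Set.inter_univ] at hsum
  have hlt := Finset.sum_lt_sum_of_nonempty Finset.univ_nonempty fun z (_ : z ∈ Finset.univ) => h z
  simp only [Finset.sum_const, Finset.card_univ, nsmul_eq_mul] at hlt
  rw [mul_div_cancel₀ _ (by positivity)] at hlt
  linarith

/-! ### Subsets of a product -/

theorem density_prod (s : Set (α × β)) : density s = 𝔼 a, density (Prod.mk a ⁻¹' s) := by
  simp only [density_eq_expect, ← Finset.univ_product_univ, Finset.expect_product]
  rfl

theorem density_prod_le {s : Set (α × β)} (hδ : 0 ≤ δ)
    (h : ∀ a, density (Prod.mk a ⁻¹' s) ≤ δ) : density s ≤ δ := by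
  rw [density_prod]
  rcases isEmpty_or_nonempty α with _ | _
  · simpa using hδ
  · exact Finset.expect_le Finset.univ_nonempty fun a _ => h a

theorem exists_le_density_fiber {s : Set (α × β)} (hδ : 0 < δ) (h : δ ≤ density s) :
    ∃ a, δ ≤ density (Prod.mk a ⁻¹' s) := by
  have : Nonempty (α × β) := (nonempty_of_density_pos (hδ.trans_le h)).nonempty
  have : Nonempty α := this.map Prod.fst
  rw [density_prod] at h
  obtain ⟨a, -, ha⟩ := Finset.exists_le_of_le_expect Finset.univ_nonempty h
  exact ⟨a, ha⟩

theorem mul_le_density_prod {t : Set α} {s : Set (α × β)} (hδ : 0 ≤ δ) (ht : δ' ≤ density t)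
    (h : ∀ a ∈ t, δ ≤ density (Prod.mk a ⁻¹' s)) : δ' * δ ≤ density (s ∩ Prod.fst ⁻¹' t) := by
  classical
  calc δ' * δ ≤ density t * δ := by gcongr
    _ = 𝔼 a, t.indicator 1 a * δ := by rw [density_eq_expect, Finset.expect_mul]
    _ ≤ 𝔼 a, density (Prod.mk a ⁻¹' (s ∩ Prod.fst ⁻¹' t)) := by
        refine Finset.expect_le_expect fun a _ => ?_
        by_cases ha : a ∈ t
        · have hfiber : Prod.mk a ⁻¹' (s ∩ Prod.fst ⁻¹' t) = Prod.mk a ⁻¹' s := by ext; simp [ha]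
          simpa [ha, hfiber] using h a ha
        · simpa [ha] using density_nonneg _
    _ = density (s ∩ Prod.fst ⁻¹' t) := (density_prod _).symm

theorem half_le_density_half_le {s : Set (α × β)} (hδ : 0 < δ) (h : δ ≤ density s) :
    δ / 2 ≤ density {a | δ / 2 ≤ density (Prod.mk a ⁻¹' s)} := by
  have : Nonempty (α × β) := (nonempty_of_density_pos (hδ.trans_le h)).nonempty
  have : Nonempty α := this.map Prod.fst
  set t := {a | δ / 2 ≤ density (Prod.mk a ⁻¹' s)}
  have hfiber : ∀ a, density (Prod.mk a ⁻¹' s) ≤ t.indicator 1 a + δ / 2 := by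
    intro a
    by_cases ha : a ∈ t
    · simp only [ha, Set.indicator_of_mem, Pi.one_apply]
      linarith [density_le_one (Prod.mk a ⁻¹' s)]
    · simpa [ha] using (not_le.1 ha).le
  have hsum := Finset.expect_le_expect fun a (_ : a ∈ Finset.univ) => hfiber a
  rw [Finset.expect_add_distrib, Fintype.expect_const, ← density_prod, ← density_eq_expect] at hsum
  linarith

theorem sq_le_density_doubling {s : Set (α × β)} (hδ : 0 ≤ δ) (h : δ ≤ density s) :
    δ ^ 2 ≤ density {x : (α × α) × β | (x.1.1, x.2) ∈ s ∧ (x.1.2, x.2) ∈ s} := by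
  classical
  let f (a : α) (b : β) : ℝ := s.indicator 1 (a, b)
  calc δ ^ 2 ≤ (𝔼 b, (𝔼 a, f a b) * 1) ^ 2 := by
        simp only [mul_one]
        gcongr
        rwa [Finset.expect_comm, ← Finset.expect_product', Finset.univ_product_univ,
          ← density_eq_expect]
    _ ≤ (𝔼 b, (𝔼 a, f a b) ^ 2) * 𝔼 _b : β, 1 ^ 2 := Finset.expect_mul_sq_le_sq_mul_sq ..
    _ ≤ 𝔼 b, (𝔼 a, f a b) ^ 2 := by
        rcases isEmpty_or_nonempty β with _ | _ <;> simp
    _ = 𝔼 b, 𝔼 x : α × α, f x.1 b * f x.2 b := by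
        simp only [sq, Finset.expect_mul_expect, ← Finset.univ_product_univ, Finset.expect_product]
    _ = density {x : (α × α) × β | (x.1.1, x.2) ∈ s ∧ (x.1.2, x.2) ∈ s} := by
        rw [Finset.expect_comm, ← Finset.expect_product', Finset.univ_product_univ,
          density_eq_expect]
        refine Finset.expect_congr rfl fun x _ => ?_
        simp [f, Set.indicator_apply, ← ite_and, and_comm]

end Density

/-! ### Density-preserving maps -/

/-- A map between finite types is density-preserving if the preimage of every set has the density
of the set, that is, if it transports the uniform distribution to the uniform distribution. -/
def DensityPreserving {α β : Type*} [Fintype α] [Fintype β] (f : α → β) : Prop :=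
  ∀ s : Set β, density (f ⁻¹' s) = density s

namespace DensityPreserving

variable {α β γ ι : Type*} [Fintype α] [Fintype β] [Fintype γ] [Fintype ι] [DecidableEq ι]

theorem comp {g : β → γ} {f : α → β} (hg : DensityPreserving g) (hf : DensityPreserving f) :
    DensityPreserving (g ∘ f) := fun s => (hf (g ⁻¹' s)).trans (hg s)

theorem equiv (e : α ≃ β) : DensityPreserving e := fun s => by
  rw [density, density, Fintype.card_congr e, Set.ncard_preimage_of_injective_subset_range
    e.injective (by simp)]

theorem snd [Nonempty α] : DensityPreserving (Prod.snd : α × β → β) := fun s =>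
  (density_prod _).trans (Fintype.expect_const (density s))

theorem id_prodMap {f : β → γ} (hf : DensityPreserving f) :
    DensityPreserving (Prod.map id f : α × β → α × γ) := fun s => by
  rw [density_prod, density_prod]
  exact Finset.expect_congr rfl fun a _ => hf (Prod.mk a ⁻¹' s)

theorem prodMap {α' : Type*} [Fintype α'] {f : α → α'} {g : β → γ} (hf : DensityPreserving f)
    (hg : DensityPreserving g) : DensityPreserving (Prod.map f g) := by
  have hswap : Prod.map f g = Prod.swap ∘ Prod.map id f ∘ Prod.swap ∘ Prod.map id g := rfl
  rw [hswap]
  exact (equiv (Equiv.prodComm γ α')).comp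
    (hf.id_prodMap.comp ((equiv (Equiv.prodComm α γ)).comp hg.id_prodMap))

theorem update (i : ι) :
    DensityPreserving fun x : α × (ι → α) => Function.update x.2 i x.1 := by
  rcases isEmpty_or_nonempty α with _ | _
  · have : IsEmpty (ι → α) := ⟨fun f => isEmptyElim (f i)⟩
    intro s
    simp [density]
  have hinv : Function.Involutive
      fun x : α × (ι → α) => (x.2 i, Function.update x.2 i x.1) := by
    rintro ⟨a, r⟩; simp
  have hsnd := (snd (α := α) (β := ι → α)).comp (equiv hinv.toPerm)
  exact hsnd

theorem eval (i : ι) : DensityPreserving fun x : ι → α => x i := fun s => by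
  rcases isEmpty_or_nonempty α with _ | _
  · have : IsEmpty (ι → α) := ⟨fun f => isEmptyElim (f i)⟩
    simp [density]
  have hfst := (snd (α := ι → α)).comp (equiv (Equiv.prodComm α (ι → α))) s
  rw [← update i, ← hfst]
  congr 1
  ext x
  simp

end DensityPreserving

/-! ### Large ordered graphs without long paths and large bicliques -/

theorem ContainsBlowup.mono {V : Type*} {G : SimpleGraph V} {r s t : ℕ} (hst : s ≤ t)
    (h : ContainsBlowup G r t) : ContainsBlowup G r s := by
  obtain ⟨A, hcard, hdisj, hadj⟩ := h
  choose B hBA hB using fun i => Finset.exists_subset_card_eq (hst.trans_eq (hcard i).symm)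
  exact ⟨B, hB, fun i j hij => (hdisj i j hij).mono (hBA i) (hBA j),
    fun i j hij x hx y hy => hadj i j hij x (hBA i hx) y (hBA j hy)⟩

theorem containsBlowup_zero {V : Type*} (G : SimpleGraph V) (r : ℕ) :
    ContainsBlowup G r 0 :=
  ⟨fun _ => ∅, by simp, by simp, by simp⟩

theorem exists_adj_of_not_containsBlowup {V : Type*} [Finite V] {G : SimpleGraph V} {t : ℕ}
    (h : ¬ ContainsBlowup Gᶜ 2 t) {A B : Set V} (hAB : Disjoint A B) (hA : t ≤ A.ncard)
    (hB : t ≤ B.ncard) : ∃ a ∈ A, ∃ b ∈ B, G.Adj a b := by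
  by_contra! hadj
  classical
  have := Fintype.ofFinite V
  rw [Set.ncard_eq_toFinset_card'] at hA hB
  obtain ⟨A', hA', hA't⟩ := Finset.exists_subset_card_eq hA
  obtain ⟨B', hB', hB't⟩ := Finset.exists_subset_card_eq hB
  have hdisj : Disjoint A' B' := (Set.disjoint_toFinset.2 hAB).mono hA' hB'
  have hcompl : ∀ a ∈ A', ∀ b ∈ B', Gᶜ.Adj a b := fun a ha b hb =>
    (SimpleGraph.compl_adj _ _ _).2 ⟨fun hab => Finset.disjoint_left.1 hdisj ha (hab ▸ hb),
      hadj a (Set.mem_toFinset.1 (hA' ha)) b (Set.mem_toFinset.1 (hB' hb))⟩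
  refine h ⟨![A', B'], ?_, ?_, ?_⟩
  · simp [Fin.forall_fin_two, hA't, hB't]
  · simp [Fin.forall_fin_two, hdisj, hdisj.symm]
  · simpa [Fin.forall_fin_two] using
      ⟨hcompl, fun b hb a ha => (hcompl a ha b hb).symm⟩

/-- Ordered graphs on a finite initial segment of `ℕ`. -/
abbrev OrdGraph := Σ n : ℕ, SimpleGraph (Fin n)

/-- The filter of properties shared, for some `c > 0`, by all sufficiently large ordered graphs
which have no induced monotone path on `m` vertices and whose complement has no biclique with parts
of size `⌈c * n / log n⌉`. -/
def avoiding (m : ℕ) : Filter OrdGraph where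
  sets := {s | ∃ c : ℝ, 0 < c ∧ ∃ n₀ : ℕ, ∀ n : ℕ, n₀ ≤ n → ∀ G : SimpleGraph (Fin n),
    ¬ HasIndMonPath G m → ¬ ContainsBlowup Gᶜ 2 ⌈c * (n : ℝ) / Real.log n⌉₊ →
    (⟨n, G⟩ : OrdGraph) ∈ s}
  univ_sets := ⟨1, one_pos, 0, by simp⟩
  sets_of_superset := by
    rintro s s' ⟨c, hc, n₀, h⟩ hss'
    exact ⟨c, hc, n₀, fun n hn G hpath hblowup => hss' (h n hn G hpath hblowup)⟩
  inter_sets := by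
    rintro s s' ⟨c, hc, n₀, h⟩ ⟨c', hc', n₀', h'⟩
    have hsize {c d : ℝ} (n : ℕ) (hcd : c ≤ d) :
        ⌈c * (n : ℝ) / Real.log n⌉₊ ≤ ⌈d * (n : ℝ) / Real.log n⌉₊ := by
      have := Real.log_natCast_nonneg n
      gcongr
    refine ⟨min c c', lt_min hc hc', max n₀ n₀', fun n hn G hpath hblowup => ⟨?_, ?_⟩⟩
    · exact h n (le_of_max_le_left hn) G hpath fun hc =>
        hblowup (hc.mono (hsize n (min_le_left _ _)))
    · exact h' n (le_of_max_le_right hn) G hpath fun hc =>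
        hblowup (hc.mono (hsize n (min_le_right _ _)))

section Avoiding

variable {m : ℕ}

theorem eventually_not_hasIndMonPath : ∀ᶠ g in avoiding m, ¬ HasIndMonPath g.2 m :=
  ⟨1, one_pos, 0, fun _ _ _ h _ => h⟩

theorem eventually_ge_card (N : ℕ) : ∀ᶠ g in avoiding m, N ≤ g.1 :=
  ⟨1, one_pos, N, fun _ h _ _ _ => h⟩

theorem clog_two_le {n : ℕ} (hn : 1 ≤ n) : (Nat.clog 2 n : ℝ) ≤ 2 * Real.log n + 1 := by
  have hlog : Real.logb 2 n ≤ 2 * Real.log n := by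
    rw [Real.logb, div_le_iff₀ (Real.log_pos one_lt_two)]
    nlinarith [Real.log_two_gt_d9, Real.log_natCast_nonneg n]
  rw [← Real.natCeil_logb_natCast]
  have hceil := Nat.ceil_lt_add_one (Real.logb_nonneg one_lt_two (Nat.one_le_cast.2 hn))
  push_cast
  linarith

/-- The factor `log₂ n` is the number of halvings in `exists_mem_ncard_sdiff_monReach_lt`. -/
theorem eventually_exists_small_not_containsBlowup {ζ : ℝ} (hζ : 0 < ζ) :
    ∀ᶠ g in avoiding m, ∃ t : ℕ, ((3 * t * (Nat.clog 2 g.1 + 2) : ℕ) : ℝ) ≤ ζ * g.1 ∧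
      ¬ ContainsBlowup g.2ᶜ 2 t := by
  have hsmall : ∀ᶠ n : ℕ in Filter.atTop, Real.log n ≤ ζ / 30 * n := by
    have := (Real.isLittleO_log_id_atTop.comp_tendsto tendsto_natCast_atTop_atTop).bound
      (show 0 < ζ / 30 by positivity)
    filter_upwards [this] with n hn
    simpa [abs_of_nonneg (Real.log_natCast_nonneg n)] using hn
  have hone : ∀ᶠ n : ℕ in Filter.atTop, 1 ≤ Real.log n :=
    (Real.tendsto_log_atTop.comp tendsto_natCast_atTop_atTop).eventually_ge_atTop 1
  obtain ⟨n₀, hn₀⟩ := Filter.eventually_atTop.1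
    (hsmall.and (hone.and (Filter.eventually_ge_atTop 1)))
  refine ⟨ζ / 30, by positivity, n₀, fun n hn G _ hG => ⟨_, ?_, hG⟩⟩
  obtain ⟨hlog, hlog1, hn1⟩ := hn₀ n hn
  have hceil : (⌈ζ / 30 * n / Real.log n⌉₊ : ℝ) ≤ ζ / 30 * n / Real.log n + 1 :=
    (Nat.ceil_lt_add_one (by positivity)).le
  push_cast
  calc 3 * (⌈ζ / 30 * n / Real.log n⌉₊ : ℝ) * (Nat.clog 2 n + 2)
      ≤ 3 * (ζ / 30 * n / Real.log n + 1) * (5 * Real.log n) := by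
        gcongr
        linarith [clog_two_le hn1]
    _ = 15 * (ζ / 30 * n) + 15 * Real.log n := by field_simp; norm_num
    _ ≤ ζ * n := by linarith

theorem eventually_exists_adj {δ : ℝ} (hδ : 0 < δ) :
    ∀ᶠ g in avoiding m, ∀ A B : Set (Fin g.1), Disjoint A B → δ ≤ density A → δ ≤ density B →
      ∃ a ∈ A, ∃ b ∈ B, g.2.Adj a b := by
  filter_upwards [eventually_exists_small_not_containsBlowup hδ]
    with g ⟨t, ht, hblowup⟩ A B hAB hA hB
  have hcard : ∀ A : Set (Fin g.1), δ ≤ density A → t ≤ A.ncard := by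
    intro A hA
    rw [← Nat.cast_le (α := ℝ), ← density_mul_card, Fintype.card_fin]
    calc (t : ℝ) ≤ (3 * t * (Nat.clog 2 g.1 + 2) : ℕ) := by
          norm_cast; nlinarith [Nat.zero_le (Nat.clog 2 g.1)]
      _ ≤ δ * g.1 := ht
      _ ≤ density A * g.1 := by gcongr
  exact exists_adj_of_not_containsBlowup hblowup hAB (hcard A hA) (hcard B hB)

end Avoiding

/-! ### Induced monotone paths -/

/-- Lists which, read from right to left, are induced monotone paths. -/
inductive IsDescIndPath {V : Type*} [LT V] (G : SimpleGraph V) : List V → Prop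
  | nil : IsDescIndPath G []
  | singleton (v : V) : IsDescIndPath G [v]
  | cons {v w : V} {l : List V} : v < w → G.Adj v w → (∀ z ∈ l, ¬ G.Adj z w) →
      IsDescIndPath G (v :: l) → IsDescIndPath G (w :: v :: l)

section Paths

variable {V : Type*}

theorem IsDescIndPath.tail [LT V] {G : SimpleGraph V} {v : V} {l : List V}
    (h : IsDescIndPath G (v :: l)) : IsDescIndPath G l := by
  cases h with
  | singleton => exact .nil
  | cons _ _ _ h => exact h

theorem IsDescIndPath.lt_and_adj_iff [Preorder V] {G : SimpleGraph V} {l : List V}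
    (h : IsDescIndPath G l) {i j : ℕ} (hij : i < j) (hj : j < l.length) :
    l[j] < l[i] ∧ (G.Adj l[j] l[i] ↔ i + 1 = j) := by
  induction h generalizing i j with
  | nil => simp at hj
  | singleton => rw [List.length_singleton] at hj; omega
  | @cons v w l hvw hadj hnadj _ ih =>
    obtain ⟨j, rfl⟩ := Nat.exists_eq_succ_of_ne_zero (Nat.ne_zero_of_lt hij)
    rw [List.length_cons] at hj
    rcases i with _ | i
    · rcases j with _ | j
      · simp [hvw, hadj]
      · exact ⟨(ih j.succ_pos (by omega)).1.trans hvw, by simpa using hnadj _ (List.getElem_mem _)⟩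
    · simpa using ih (by omega : i < j) (by omega)

theorem IsDescIndPath.hasIndMonPath {n : ℕ} {G : SimpleGraph (Fin n)} {l : List (Fin n)}
    (h : IsDescIndPath G l) : HasIndMonPath G l.length := by
  have hrev {i j : Fin l.length} (hij : i < j) :
      l[i.rev] < l[j.rev] ∧ (G.Adj l[i.rev] l[j.rev] ↔ (i : ℕ) + 1 = j) := by
    have := h.lt_and_adj_iff (i := j.rev) (j := i.rev) (Fin.rev_lt_rev.2 hij) i.rev.2
    refine ⟨this.1, this.2.trans ?_⟩
    simp only [Fin.val_rev]
    omega
  refine ⟨fun i => l[i.rev], fun i j hij => (hrev hij).1, fun i j => ?_⟩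
  rcases lt_trichotomy i j with hij | rfl | hij
  · rw [(hrev hij).2]; omega
  · simp
  · rw [G.adj_comm, (hrev hij).2]; omega

variable [LT V] {G : SimpleGraph V} {l : List V} {B B' Y Y' : Set V} {b : V}

/-- The later neighbours of a vertex of an ordered graph. -/
def laterNeighborSet (G : SimpleGraph V) (v : V) : Set V := {w | v < w ∧ G.Adj v w}

/-- A path under construction, listed from its last vertex to its first: it can be continued to
every vertex of `B`, and its vertices have no neighbours in `Y`, which is where the vertices after
the next one are to be found. -/
structure IsStem (G : SimpleGraph V) (l : List V) (B Y : Set V) : Prop where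
  isDescIndPath : ∀ b ∈ B, IsDescIndPath G (b :: l)
  not_adj : ∀ y ∈ Y, ∀ z ∈ l, ¬ G.Adj z y

theorem IsStem.nil : IsStem G [] B Y := ⟨fun b _ => .singleton b, by simp⟩

theorem IsStem.mono (h : IsStem G l B Y) (hB : B' ⊆ B) (hY : Y' ⊆ Y) : IsStem G l B' Y' :=
  ⟨fun b hb => h.1 b (hB hb), fun y hy => h.2 y (hY hy)⟩

theorem IsStem.cons (h : IsStem G l B Y) (hb : b ∈ B) :
    IsStem G (b :: l) (Y ∩ laterNeighborSet G b) (Y \ G.neighborSet b) where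
  isDescIndPath y hy := .cons hy.2.1 hy.2.2 (h.not_adj y hy.1) (h.isDescIndPath b hb)
  not_adj y hy z hz := by
    rcases List.mem_cons.1 hz with rfl | hz
    · exact hy.2
    · exact h.not_adj y hy.1 z hz

/-- All elements of `A` are smaller than all elements of `B`. -/
def Precedes (A B : Set V) : Prop := ∀ a ∈ A, ∀ b ∈ B, a < b

theorem Precedes.mono {A A' B B' : Set V} (h : Precedes A B) (hA : A' ⊆ A) (hB : B' ⊆ B) :
    Precedes A' B' := fun a ha b hb => h a (hA ha) b (hB hb)

end Paths

theorem Precedes.disjoint {V : Type*} [Preorder V] {A B : Set V} (h : Precedes A B) :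
    Disjoint A B :=
  Set.disjoint_left.2 fun x hA hB => (h x hA x hB).false

theorem exists_precedes_sdiff {V : Type*} [LinearOrder V] [Finite V] {A : Set V} {m : ℕ}
    (hm : m ≤ A.ncard) : ∃ B ⊆ A, B.ncard = m ∧ Precedes B (A \ B) := by
  induction m with
  | zero => exact ⟨∅, by simp, by simp, by simp [Precedes]⟩
  | succ m ih =>
    obtain ⟨B, hBA, hBm, hB⟩ := ih (by omega)
    have hne : (A \ B).Nonempty := by
      rw [← Set.ncard_pos]
      have := Set.ncard_sdiff_add_ncard_of_subset hBA
      omega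
    obtain ⟨a, ha, hmin⟩ := Set.exists_min_image (A \ B) id (Set.toFinite _) hne
    refine ⟨insert a B, Set.insert_subset ha.1 hBA, by simp [Set.ncard_insert_of_notMem ha.2, hBm],
      ?_⟩
    rintro b (rfl | hb) c ⟨hc, hcB⟩
    · exact (hmin c ⟨hc, fun h => hcB (.inr h)⟩).lt_of_ne fun h => hcB (.inl h.symm)
    · exact hB b hb c ⟨hc, fun h => hcB (.inr h)⟩

/-! ### Dense sets contain many edges -/

section Reach

variable {V : Type*} [LinearOrder V] {G : SimpleGraph V} {Λ U U' : Set V} {v w : V}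

/-- The vertices reached from `U` by monotone paths, not necessarily induced, all of whose vertices
after the first lie in `Λ`. -/
def monReach (G : SimpleGraph V) (Λ U : Set V) : Set V :=
  {w | ∃ u ∈ U, Relation.ReflTransGen (fun x y => y ∈ Λ ∩ laterNeighborSet G x) u w}

theorem subset_monReach : U ⊆ monReach G Λ U := fun u hu => ⟨u, hu, .refl⟩

theorem mem_monReach_of_mem_laterNeighborSet (hv : v ∈ monReach G Λ U)
    (hw : w ∈ Λ ∩ laterNeighborSet G v) : w ∈ monReach G Λ U :=
  let ⟨u, hu, huv⟩ := hv
  ⟨u, hu, huv.tail hw⟩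

theorem monReach_union : monReach G Λ (U ∪ U') = monReach G Λ U ∪ monReach G Λ U' := by
  ext w
  simp only [monReach, Set.mem_union, Set.mem_ofPred_eq, or_and_right, exists_or]

theorem monReach_singleton_subset (h : w ∈ monReach G Λ {v}) :
    monReach G Λ {w} ⊆ monReach G Λ {v} := by
  obtain ⟨_, rfl, hvw⟩ := h
  rintro x ⟨_, rfl, hwx⟩
  exact ⟨_, rfl, hvw.trans hwx⟩

theorem le_of_mem_monReach (h : w ∈ monReach G Λ {v}) : v ≤ w := by
  obtain ⟨_, rfl, h⟩ := h
  induction h with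
  | refl => exact le_rfl
  | tail _ h ih => exact ih.trans h.2.1.le

/-- The last neighbour of `v` on a monotone path from `v` to `w`. -/
theorem exists_mem_laterNeighborSet_of_mem_monReach (h : w ∈ monReach G Λ {v}) (hvw : v < w) :
    ∃ v' ∈ Λ ∩ laterNeighborSet G v, w ∈ monReach G (Λ \ G.neighborSet v) {v'} := by
  obtain ⟨v, rfl, h⟩ := h
  induction h with
  | refl => exact (hvw.false).elim
  | @tail b c hb hc ih =>
    by_cases hvc : G.Adj v c
    · exact ⟨c, ⟨hc.1, hvw, hvc⟩, subset_monReach rfl⟩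
    · have hvb := (le_of_mem_monReach ⟨_, rfl, hb⟩).lt_of_ne fun h => hvc (h ▸ hc.2.2)
      obtain ⟨v', hv', hb'⟩ := ih hvb
      exact ⟨v', hv', mem_monReach_of_mem_laterNeighborSet hb' ⟨⟨hc.1, hvc⟩, hc.2⟩⟩

variable [Finite V] {t : ℕ} (hG : ¬ ContainsBlowup Gᶜ 2 t)

include hG

theorem ncard_sdiff_monReach_lt {B C : Set V} (hB : t ≤ (B ∩ monReach G Λ U).ncard)
    (hBC : Precedes B C) (hC : C ⊆ Λ) : (C \ monReach G Λ U).ncard < t := by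
  by_contra! h
  obtain ⟨b, hb, c, hc, hbc⟩ := exists_adj_of_not_containsBlowup hG
    (hBC.mono Set.inter_subset_left Set.sdiff_subset).disjoint hB h
  exact hc.2 (mem_monReach_of_mem_laterNeighborSet hb.2 ⟨hC hc.1, hBC b hb.1 c hc.1, hbc⟩)

/-- Most of the first `3 * t` vertices of `S` are reached from `U`, so at least `t` of them are
reached from one half of `U`; hence most of the remaining vertices of `S` are reached from that
half, and so on. -/
theorem exists_mem_ncard_sdiff_monReach_lt (k : ℕ) {U B S : Set V} (hU : U.ncard ≤ 2 ^ k)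
    (hB : t ≤ (B ∩ monReach G Λ U).ncard) (hBS : Precedes B S) (hS : S ⊆ Λ)
    (hSk : 3 * t * k ≤ S.ncard) :
    ∃ u ∈ U, ∃ T ⊆ S, S.ncard ≤ T.ncard + 3 * t * k ∧ (T \ monReach G Λ {u}).ncard < t := by
  induction k generalizing U B S with
  | zero =>
    have ht : 0 < t := Nat.pos_of_ne_zero fun h => hG (h ▸ containsBlowup_zero _ _)
    obtain ⟨b, -, u, hu, -⟩ := (Set.ncard_pos (Set.toFinite _)).1 (ht.trans_le hB)
    have hUu : U = {u} := Set.eq_singleton_iff_unique_mem.2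
      ⟨hu, fun x hx => (Set.ncard_le_one (Set.toFinite _)).1 (by simpa using hU) x hx u hu⟩
    exact ⟨u, hu, S, subset_rfl, by simp, hUu ▸ ncard_sdiff_monReach_lt hG hB hBS hS⟩
  | succ k ih =>
    obtain ⟨A, hAS, hA, hAprec⟩ := exists_precedes_sdiff (A := S) (m := 3 * t) (by nlinarith)
    have hS' := Set.ncard_sdiff_add_ncard_of_subset hAS
    have hunreached := ncard_sdiff_monReach_lt hG hB (hBS.mono subset_rfl hAS) (hAS.trans hS)
    have hreached := Set.ncard_inter_add_ncard_sdiff_eq_ncard A (monReach G Λ U)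
    obtain ⟨U₁, hU₁, hcard⟩ := Set.exists_subset_card_eq (min_le_left U.ncard (2 ^ k))
    have hU₂ := Set.ncard_sdiff_add_ncard_of_subset hU₁
    rw [pow_succ] at hU
    obtain ⟨U', hU'U, hU', hAU'⟩ :
        ∃ U' ⊆ U, U'.ncard ≤ 2 ^ k ∧ t ≤ (A ∩ monReach G Λ U').ncard := by
      by_contra! h
      have hsplit := Set.ncard_union_le (A ∩ monReach G Λ U₁) (A ∩ monReach G Λ (U \ U₁))
      rw [← Set.inter_union_distrib_left, ← monReach_union, Set.union_sdiff_cancel hU₁] at hsplit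
      have h₁ := h U₁ hU₁ (by omega)
      have h₂ := h (U \ U₁) Set.sdiff_subset (by omega)
      omega
    obtain ⟨u, hu, T, hT, hTcard, hreach⟩ :=
      ih hU' hAU' hAprec (Set.sdiff_subset.trans hS) (by rw [mul_add_one] at hSk; omega)
    exact ⟨u, hU'U hu, T, hT.trans Set.sdiff_subset, by rw [mul_add_one]; omega, hreach⟩

omit hG

/-- A path in `Y` ending at `v`, which can be continued monotonically within `Λ`, all of whose
elements have no neighbours on the path before `v`, to all but fewer than `t` elements of `T`. -/
structure IsReachingStem (G : SimpleGraph V) (t : ℕ) (Y : Set V) (l : List V) (v : V)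
    (Λ T : Set V) : Prop where
  isStem : IsStem G l {v} Λ
  mem : v ∈ Y
  subset : Λ ⊆ Y
  target_subset : T ⊆ Λ
  precedes : Precedes {v} T
  ncard_sdiff_lt : (T \ monReach G Λ {v}).ncard < t

variable {Y : Set V} {d k : ℕ} (hV : Nat.card V ≤ 2 ^ k)

include hG hV

theorem exists_isReachingStem_nil {s : ℕ} (hY : t + 3 * t * k + s ≤ Y.ncard) :
    ∃ v T, IsReachingStem G t Y [] v Y T ∧ s ≤ T.ncard := by
  obtain ⟨U, hUY, hU, hprec⟩ := exists_precedes_sdiff (A := Y) (m := t) (by omega)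
  have hcard := Set.ncard_sdiff_add_ncard_of_subset hUY
  obtain ⟨u, hu, T, hT, hTcard, hreach⟩ := exists_mem_ncard_sdiff_monReach_lt hG (Λ := Y) k
    ((Set.ncard_le_card U).trans hV)
    (by rw [Set.inter_eq_left.2 subset_monReach, hU]) hprec Set.sdiff_subset (by omega)
  exact ⟨u, T, ⟨.nil, hUY hu, subset_rfl, hT.trans Set.sdiff_subset,
    hprec.mono (Set.singleton_subset_iff.2 hu) hT, hreach⟩, by omega⟩

theorem IsReachingStem.exists_cons {l : List V} {T : Set V} {s : ℕ}
    (h : IsReachingStem G t Y l v Λ T) (hd : (Y ∩ laterNeighborSet G v).ncard ≤ d)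
    (hT : d + 2 * t + 3 * t * k + s ≤ T.ncard) :
    ∃ v' Λ' T', IsReachingStem G t Y (v :: l) v' Λ' T' ∧ s ≤ T'.ncard := by
  have hsub : T ∩ G.neighborSet v ⊆ Y ∩ laterNeighborSet G v := fun x hx =>
    ⟨h.subset (h.target_subset hx.1), h.precedes v rfl x hx.1, hx.2⟩
  have hTd := (Set.ncard_le_ncard hsub).trans hd
  have hTcard := Set.ncard_inter_add_ncard_sdiff_eq_ncard T (G.neighborSet v)
  obtain ⟨T₁, hT₁, hT₁card, hprec⟩ :=
    exists_precedes_sdiff (A := T \ G.neighborSet v) (m := 2 * t) (by omega)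
  have hScard := Set.ncard_sdiff_add_ncard_of_subset hT₁
  have hunreached := (Set.ncard_le_ncard (Set.sdiff_subset_sdiff_left (t := monReach G Λ {v})
    (hT₁.trans Set.sdiff_subset))).trans_lt h.ncard_sdiff_lt
  have hreached := Set.ncard_inter_add_ncard_sdiff_eq_ncard T₁ (monReach G Λ {v})
  obtain ⟨w, ⟨hw, hvw⟩, T', hT', hT'card, hreach⟩ :=
    exists_mem_ncard_sdiff_monReach_lt hG (Λ := Λ \ G.neighborSet v) k
      (U := T₁ ∩ monReach G Λ {v})
      ((Set.ncard_le_card _).trans hV)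
      (by rw [Set.inter_eq_left.2 subset_monReach]; omega)
      (hprec.mono Set.inter_subset_left subset_rfl)
      (Set.sdiff_subset.trans (Set.sdiff_subset_sdiff_left h.target_subset)) (by omega)
  obtain ⟨v', hv', hw'⟩ := exists_mem_laterNeighborSet_of_mem_monReach hvw
    (h.precedes v rfl w (hT₁ hw).1)
  refine ⟨v', Λ \ G.neighborSet v, T', ⟨(h.isStem.cons rfl).mono (by simpa using hv') subset_rfl,
    h.subset hv'.1, Set.sdiff_subset.trans h.subset, fun x hx => ?_, ?_, ?_⟩, by omega⟩
  · exact ⟨h.target_subset (hT' hx).1.1, (hT' hx).1.2⟩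
  · rintro _ rfl x hx
    exact (le_of_mem_monReach hw').trans_lt (hprec w hw x (hT' hx))
  · exact (Set.ncard_le_ncard
      (Set.sdiff_subset_sdiff_right (monReach_singleton_subset hw'))).trans_lt hreach

theorem exists_isReachingStem (hd : ∀ v ∈ Y, (Y ∩ laterNeighborSet G v).ncard ≤ d) {M : ℕ}
    (hM : d + 2 * t + 3 * t * k ≤ M) (j r : ℕ) (hY : (r + j + 1) * M ≤ Y.ncard) :
    ∃ l v Λ T, l.length = j ∧ IsReachingStem G t Y l v Λ T ∧ r * M ≤ T.ncard := by
  induction j generalizing r with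
  | zero =>
    obtain ⟨v, T, h, hT⟩ := exists_isReachingStem_nil hG hV (Y := Y) (s := r * M)
      (by rw [add_zero, add_one_mul] at hY; omega)
    exact ⟨[], v, Y, T, rfl, h, hT⟩
  | succ j ih =>
    obtain ⟨l, v, Λ, T, hl, h, hT⟩ := ih (r + 1) (by rwa [add_right_comm r 1 j])
    obtain ⟨v', Λ', T', h', hT'⟩ := h.exists_cons hG hV (hd v h.mem) (s := r * M)
      (by rw [add_one_mul] at hT; omega)
    exact ⟨v :: l, v', Λ', T', by simp [hl], h', hT'⟩

theorem exists_isDescIndPath (hd : ∀ v ∈ Y, (Y ∩ laterNeighborSet G v).ncard ≤ d) (m : ℕ)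
    (hY : (m + 1) * (d + 2 * t + 3 * t * k) ≤ Y.ncard) :
    ∃ l, l.length = m ∧ IsDescIndPath G l := by
  obtain ⟨l, v, Λ, T, hl, h, -⟩ := exists_isReachingStem hG hV hd le_rfl m 0 (by simpa using hY)
  exact ⟨l, hl, (h.isStem.isDescIndPath v rfl).tail⟩

end Reach

theorem exists_le_density_laterNeighborSet (m : ℕ) {ε : ℝ} (hε : 0 < ε) :
    ∃ ψ > 0, ∀ᶠ g in avoiding m, ∀ Y : Set (Fin g.1), ε ≤ density Y →
      ψ ≤ density {a ∈ Y | ψ ≤ density (Y ∩ laterNeighborSet g.2 a)} := by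
  set ψ := ε / (2 * m + 3) with hψ
  have hψ0 : 0 < ψ := by positivity
  have hψε : ψ * (2 * m + 3) = ε := div_mul_cancel₀ _ (by positivity)
  refine ⟨ψ, hψ0, ?_⟩
  filter_upwards [eventually_exists_small_not_containsBlowup hψ0, eventually_not_hasIndMonPath]
    with g ⟨t, ht, hG⟩ hpath Y hY
  by_contra! hlt
  let P := {a | ψ ≤ density (Y ∩ laterNeighborSet g.2 a)}
  change density (Y ∩ P) < ψ at hlt
  set Z := Y \ P
  have hZdensity : ε - ψ ≤ density Z := by linarith [density_sub_density_inter_le Y P]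
  have hdeg : ∀ v ∈ Z, (Z ∩ laterNeighborSet g.2 v).ncard ≤ ⌊ψ * g.1⌋₊ := by
    intro v hv
    refine Nat.le_floor ?_
    rw [← density_mul_card, Fintype.card_fin]
    gcongr
    exact (density_mono (Set.inter_subset_inter_left _ fun a ha => ha.1)).trans (not_le.1 hv.2).le
  obtain ⟨l, rfl, hl⟩ := exists_isDescIndPath hG (k := Nat.clog 2 g.1)
    (by simpa using Nat.le_pow_clog (by norm_num) _) hdeg m (by
      rw [← Nat.cast_le (α := ℝ), ← density_mul_card, Fintype.card_fin]
      have hfloor := Nat.floor_le (show 0 ≤ ψ * g.1 by positivity)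
      push_cast at ht ⊢
      calc ((m : ℝ) + 1) * (⌊ψ * g.1⌋₊ + 2 * t + 3 * t * Nat.clog 2 g.1)
          ≤ (m + 1) * (2 * (ψ * g.1)) := by gcongr; linarith
        _ = (ε - ψ) * g.1 := by rw [← hψε]; ring
        _ ≤ density Z * g.1 := by gcongr)
  exact hpath hl.hasIndMonPath

theorem exists_le_density_laterAdj (m : ℕ) {ε : ℝ} (hε : 0 < ε) :
    ∃ ψ > 0, ∀ᶠ g in avoiding m, ∀ Y : Set (Fin g.1), ε ≤ density Y →
      ψ ≤ density {x : Fin g.1 × Fin g.1 | x.1 ∈ Y ∧ x.2 ∈ Y ∧ x.2 ∈ laterNeighborSet g.2 x.1} := by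
  obtain ⟨ψ, hψ, h⟩ := exists_le_density_laterNeighborSet m hε
  refine ⟨ψ * ψ, by positivity, ?_⟩
  filter_upwards [h] with g hg Y hY
  refine (mul_le_density_prod (s := {x | x.2 ∈ Y ∩ laterNeighborSet g.2 x.1}) hψ.le (hg Y hY)
    fun a ha => ha.2).trans (density_mono fun x hx => ⟨hx.2.1, hx.1⟩)

/-! ### Independent transversals -/

section Transversals

variable {V ι : Type*}

/-- The independent transversals of a family of vertex sets, its zones: the ways to pick a vertex
from each zone such that no two of the picked vertices are adjacent. -/
def indepTransversals (G : SimpleGraph V) (X : ι → Set V) : Set (ι → V) :=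
  {x | (∀ i, x i ∈ X i) ∧ ∀ i j, ¬ G.Adj (x i) (x j)}

/-- The zones of the family follow one another in the vertex order. -/
def OrderedZones [LT ι] [LT V] (X : ι → Set V) : Prop := ∀ ⦃i j⦄, i < j → Precedes (X i) (X j)

theorem OrderedZones.mono [LT ι] [LT V] {X X' : ι → Set V} (h : OrderedZones X) (hX : X' ≤ X) :
    OrderedZones X' := fun i j hij => (h hij).mono (hX i) (hX j)

variable [Fintype V]

/-- The density of the adjacent pairs in `A × B`. -/
noncomputable def adjDensity (G : SimpleGraph V) (A B : Set V) : ℝ :=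
  density {x : V × V | x.1 ∈ A ∧ x.2 ∈ B ∧ G.Adj x.1 x.2}

theorem adjDensity_mono {G : SimpleGraph V} {A A' B B' : Set V} (hA : A' ⊆ A) (hB : B' ⊆ B) :
    adjDensity G A' B' ≤ adjDensity G A B :=
  density_mono fun _ hx => ⟨hA hx.1, hB hx.2.1, hx.2.2⟩

/-- The edge density between the two zones of each pair in `S` is at most `η`. -/
def SparsePairs (G : SimpleGraph V) (X : ι → Set V) (S : Set (ι × ι)) (η : ℝ) : Prop :=
  ∀ ⦃i j⦄, (i, j) ∈ S → adjDensity G (X i) (X j) ≤ η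

theorem SparsePairs.mono {G : SimpleGraph V} {X X' : ι → Set V} {S : Set (ι × ι)} {η η' : ℝ}
    (h : SparsePairs G X S η) (hX : X' ≤ X) (hη : η ≤ η') : SparsePairs G X' S η' :=
  fun i j hij => (adjDensity_mono (hX i) (hX j)).trans ((h hij).trans hη)

theorem sub_le_density_of_adjDensity_le_sq {G : SimpleGraph V} {A B : Set V} {θ : ℝ} (hθ : 0 < θ)
    (h : adjDensity G A B ≤ θ ^ 2) :
    density A - θ ≤ density {a ∈ A | density (B ∩ G.neighborSet a) < θ} := by
  set P := {a ∈ A | θ ≤ density (B ∩ G.neighborSet a)}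
  have hmul := mul_le_density_prod (t := P) (s := {x : V × V | x.2 ∈ B ∩ G.neighborSet x.1}) hθ.le
    le_rfl fun a ha => ha.2
  have hle := hmul.trans
    ((density_mono fun x hx => (⟨hx.2.1, hx.1⟩ : x.1 ∈ A ∧ x.2 ∈ B ∧ G.Adj x.1 x.2)).trans h)
  rw [sq] at hle
  have hsdiff : A \ P ⊆ {a ∈ A | density (B ∩ G.neighborSet a) < θ} := fun a ha =>
    ⟨ha.1, not_le.1 fun h => ha.2 ⟨ha.1, h⟩⟩
  linarith [le_of_mul_le_mul_right hle hθ, density_sub_le_density_sdiff A P, density_mono hsdiff]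

variable [Fintype ι] [DecidableEq ι] {G : SimpleGraph V} {X : ι → Set V} {ε : ℝ}

theorem le_density_zone (h : ε ≤ density (indepTransversals G X)) (i : ι) : ε ≤ density (X i) :=
  (h.trans (density_mono fun _ hx => hx.1 i)).trans_eq (DensityPreserving.eval i _)

theorem half_le_density_zone (hε : 0 < ε) (h : ε ≤ density (indepTransversals G X)) (i : ι) :
    ε / 2 ≤ density {b ∈ X i | ∀ k ≠ i, ε / 2 ≤ density (X k \ G.neighborSet b)} := by
  rw [← DensityPreserving.update i] at h
  refine (half_le_density_half_le hε h).trans (density_mono fun b hb => ⟨?_, fun k hk => ?_⟩)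
  · obtain ⟨x, hx⟩ := nonempty_of_density_pos ((half_pos hε).trans_le hb)
    simpa using hx.1 i
  · rw [← DensityPreserving.eval k]
    refine hb.trans (density_mono fun x hx => ⟨?_, ?_⟩)
    · simpa [hk] using hx.1 k
    · simpa [hk] using hx.2 i k

end Transversals

theorem exists_le_density_update_mem {ι : Type*} [Fintype ι] [DecidableEq ι] (m : ℕ) (i : ι) {ε : ℝ}
    (hε : 0 < ε) : ∃ σ > 0, ∀ᶠ g in avoiding m, ∀ K : Set (ι → Fin g.1), ε ≤ density K →
      ∃ a, σ ≤ density {x ∈ K | Function.update x i a ∈ K ∧ x i ∈ laterNeighborSet g.2 a} := by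
  obtain ⟨ψ, hψ, hadj⟩ := exists_le_density_laterAdj m (half_pos hε)
  refine ⟨ε / 2 * ψ, by positivity, ?_⟩
  filter_upwards [hadj] with ⟨n, G⟩ hadj K hK
  rw [← (DensityPreserving.update i).comp (.equiv (Equiv.prodComm (ι → Fin n) (Fin n)))] at hK
  have htriples := mul_le_density_prod (s := {x : (ι → Fin n) × (Fin n × Fin n) |
    Function.update x.1 i x.2.1 ∈ K ∧ Function.update x.1 i x.2.2 ∈ K ∧
      x.2.2 ∈ laterNeighborSet G x.2.1}) hψ.le (half_le_density_half_le hε hK)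
    fun r hr => hadj {a | Function.update r i a ∈ K} hr
  let e : Fin n × (Fin n × (ι → Fin n)) ≃ (ι → Fin n) × (Fin n × Fin n) :=
    (Equiv.prodAssoc _ _ _).symm.trans (Equiv.prodComm _ _)
  rw [← DensityPreserving.equiv e] at htriples
  obtain ⟨a, ha⟩ := exists_le_density_fiber (by positivity) htriples
  refine ⟨a, ?_⟩
  rw [← DensityPreserving.update i]
  refine ha.trans (density_mono ?_)
  rintro ⟨c, r⟩ ⟨⟨haK, hcK, hac⟩, -⟩
  exact ⟨hcK, by simpa [e] using haK, by simpa [e] using hac⟩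

/-- Two independent transversals which differ only in zone `i`, where they have adjacent vertices
`a < c`, show that `a` can serve as the first vertex of a path and `c` as its second one. -/
theorem exists_initial_stem {ι : Type*} [Fintype ι] [LinearOrder ι] (m : ℕ) (i : ι) {ε : ℝ}
    (hε : 0 < ε) : ∃ ε' > 0, ∀ᶠ g in avoiding m, ∀ X : ι → Set (Fin g.1),
      ε ≤ density (indepTransversals g.2 X) → ∃ (a : Fin g.1) (X' : ι → Set (Fin g.1)),
        X' ≤ X ∧ IsStem g.2 [a] (X' i) (⋃ k > i, X' k) ∧
          ε' ≤ density (indepTransversals g.2 X') := by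
  obtain ⟨ε', hε', hupdate⟩ := exists_le_density_update_mem m i hε
  refine ⟨ε', hε', ?_⟩
  filter_upwards [hupdate] with ⟨n, G⟩ hupdate X hX
  obtain ⟨a, ha⟩ := hupdate _ hX
  refine ⟨a, Function.update (fun k => X k \ G.neighborSet a) i (X i ∩ laterNeighborSet G a),
    update_le_iff.2 ⟨Set.inter_subset_left, fun k _ => Set.sdiff_subset⟩, ⟨?_, ?_⟩,
    ha.trans (density_mono ?_)⟩
  · intro c hc
    rw [Function.update_self] at hc
    exact .cons hc.2.1 hc.2.2 (by simp) (.singleton a)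
  · simp only [Set.mem_iUnion, List.mem_singleton, forall_eq]
    rintro y ⟨k, hk, hy⟩
    rw [Function.update_of_ne hk.ne'] at hy
    exact hy.2
  · rintro x ⟨hx, hax, hac⟩
    refine ⟨(Function.forall_update_iff _ fun k Y => x k ∈ Y).2 ⟨⟨hx.1 i, hac⟩, fun k hk =>
      ⟨hx.1 k, ?_⟩⟩, hx.2⟩
    simpa [hk] using hax.2 i k

/-! ### Transitions -/

section Transition

variable {ι : Type*} [LinearOrder ι] {m : ℕ}

/-- In every dense family of ordered zones of a large graph as in `avoiding m`, one of the pairs of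
zones in `S` spans many edges. The bounds may depend on the density of the family. -/
def SomePairDense [Fintype ι] (m : ℕ) (S : Set (ι × ι)) : Prop :=
  ∀ ε : ℝ, 0 < ε → ∃ η > 0, ∀ᶠ g in avoiding m, ∀ X : ι → Set (Fin g.1),
    OrderedZones X → ε ≤ density (indepTransversals g.2 X) →
      ¬ SparsePairs g.2 X S η

/-- The pairs `(x, y)` such that `y` and the results of exchanging the entries of `x` at `i`, and at
`i` and `j`, for those of `y` all lie in `K`, and the entry of `x` at `j` is a later neighbour of
that of `y`. -/
def exchangePairs {V : Type*} [LT V] (G : SimpleGraph V) (K : Set (ι → V)) (i j : ι) :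
    Set ((ι → V) × (ι → V)) :=
  {p | p.2 ∈ K ∧ Function.update p.1 i (p.2 i) ∈ K ∧
    Function.update (Function.update p.1 i (p.2 i)) j (p.2 j) ∈ K ∧
    p.1 j ∈ laterNeighborSet G (p.2 j)}

theorem exists_le_density_exchangePairs [Fintype ι] (m : ℕ) {i j : ι} (hij : i ≠ j) {ε : ℝ}
    (hε : 0 < ε) : ∃ σ > 0, ∀ᶠ g in avoiding m, ∀ K : Set (ι → Fin g.1), ε ≤ density K →
      σ ≤ density (exchangePairs g.2 K i j) := by
  obtain ⟨ψ, hψ, hadj⟩ := exists_le_density_laterAdj m (show 0 < ε ^ 2 / 2 by positivity)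
  refine ⟨ε ^ 2 / 2 * ψ, by positivity, ?_⟩
  filter_upwards [hadj] with ⟨n, G⟩ hadj K hK
  let V := Fin n
  let R := ι → V
  have hput := (DensityPreserving.update (α := V) j).comp (.id_prodMap (.update i))
  let e₁ : R × (V × V) ≃ V × (V × R) :=
    ⟨fun x => (x.2.2, x.2.1, x.1), fun x => (x.2.2, x.2.1, x.1), fun _ => rfl, fun _ => rfl⟩
  rw [← hput.comp (.equiv e₁)] at hK
  have hpairs := sq_le_density_doubling hε.le hK
  rw [← DensityPreserving.equiv (Equiv.prodAssoc (R × R) V V)] at hpairs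
  let put (r : R) (b a : V) : R := Function.update (Function.update r i b) j a
  have hquads := mul_le_density_prod (s := {x : ((R × R) × V) × (V × V) |
    (put x.1.1.1 x.1.2 x.2.1 ∈ K ∧ put x.1.1.2 x.1.2 x.2.1 ∈ K) ∧
    (put x.1.1.1 x.1.2 x.2.2 ∈ K ∧ put x.1.1.2 x.1.2 x.2.2 ∈ K) ∧
      x.2.2 ∈ laterNeighborSet G x.2.1}) hψ.le (half_le_density_half_le (by positivity) hpairs)
    fun w hw => hadj {a | put w.1.1 w.2 a ∈ K ∧ put w.1.2 w.2 a ∈ K} hw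
  let e₂ : ((R × R) × V) × (V × V) ≃ (V × R) × (V × (V × R)) :=
    ⟨fun x => ((x.2.2, x.1.1.1), (x.2.1, x.1.2, x.1.1.2)),
      fun y => (((y.1.2, y.2.2.2), y.2.2.1), (y.2.1, y.1.1)), fun _ => rfl, fun _ => rfl⟩
  rw [← ((DensityPreserving.update (α := V) j).prodMap hput).comp (.equiv e₂)]
  refine hquads.trans (density_mono ?_)
  rintro ⟨⟨⟨r, r'⟩, b⟩, ⟨a, c⟩⟩ ⟨⟨⟨hra, hr'a⟩, ⟨hrc, -⟩, hac⟩, -⟩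
  have hc : Function.update (Function.update r j c) i b = put r b c :=
    Function.update_comm hij.symm ..
  refine ⟨hr'a, ?_, ?_, ?_⟩
  · simpa [e₂, hij, hc] using hrc
  · simpa [e₂, hij, hc, put] using hra
  · simpa [e₂] using hac

section Candidates

variable {V : Type*} {G : SimpleGraph V} {X : ι → Set V} {i j : ι} {x : ι → V} {v : V}

/-- The vertices of zone `i` which have no neighbours on `x` outside that zone. -/
def sourceCandidates (G : SimpleGraph V) (X : ι → Set V) (i : ι) (x : ι → V) : Set V :=
  {b ∈ X i | ∀ k ≠ i, ¬ G.Adj b (x k)}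

theorem sourceCandidates_update :
    sourceCandidates G X i (Function.update x i v) = sourceCandidates G X i x := by
  ext b
  simp +contextual [sourceCandidates]

variable [LT V]

/-- The vertices of zone `j` which have no neighbours on `x` outside the zones `i` and `j`, and
have the entry of `x` in zone `j` as a later neighbour. -/
def targetCandidates (G : SimpleGraph V) (X : ι → Set V) (i j : ι) (x : ι → V) : Set V :=
  {a ∈ X j | x j ∈ laterNeighborSet G a ∧ ∀ k, k ≠ i → k ≠ j → ¬ G.Adj a (x k)}

/-- The zones, with zone `i` shrunk to the source candidates and zone `j` to the target
candidates. -/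
def candidateZones (G : SimpleGraph V) (X : ι → Set V) (i j : ι) (x : ι → V) : ι → Set V :=
  Function.update (Function.update X i (sourceCandidates G X i x)) j (targetCandidates G X i j x)

theorem candidateZones_le : candidateZones G X i j x ≤ X := by
  refine update_le_iff.2 ⟨Set.sep_subset _ _, fun k _ => ?_⟩
  refine (?_ : Function.update X i _ ≤ X) k
  exact update_le_iff.2 ⟨Set.sep_subset _ _, fun k _ => le_rfl⟩

theorem exchangePairs_fiber_subset (hij : i ≠ j) :
    Prod.mk x ⁻¹' exchangePairs G (indepTransversals G X) i j ⊆
      indepTransversals G (candidateZones G X i j x) := by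
  rintro y ⟨hy, hyi, hyj, hxy⟩
  refine ⟨fun k => ?_, hy.2⟩
  rcases eq_or_ne k j with rfl | hkj
  · rw [candidateZones, Function.update_self]
    refine ⟨hy.1 k, hxy, fun l hli hlk => ?_⟩
    simpa [hli, hlk] using hyj.2 k l
  rw [candidateZones, Function.update_of_ne hkj]
  rcases eq_or_ne k i with rfl | hki
  · rw [Function.update_self]
    refine ⟨hy.1 k, fun l hlk => ?_⟩
    simpa [hlk] using hyi.2 k l
  · simpa [hki] using hy.1 k

theorem targetCandidates_update (hij : i ≠ j) :
    targetCandidates G X i j (Function.update x i v) = targetCandidates G X i j x := by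
  ext a
  simp +contextual [targetCandidates, hij.symm]

end Candidates

variable [Fintype ι]

theorem SomePairDense.exists_lt_adjDensity_candidates {S : Set (ι × ι)} {i j : ι}
    (h : SomePairDense m (insert (i, j) S)) (hij : i ≠ j) {σ : ℝ} (hσ : 0 < σ) :
    ∃ η > 0, ∀ᶠ g in avoiding m, ∀ X : ι → Set (Fin g.1), OrderedZones X →
      SparsePairs g.2 X S η →
      ∀ x, σ ≤ density (Prod.mk x ⁻¹' exchangePairs g.2 (indepTransversals g.2 X) i j) →
        η < adjDensity g.2 (sourceCandidates g.2 X i x) (targetCandidates g.2 X i j x) := by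
  obtain ⟨η, hη, h⟩ := h σ hσ
  refine ⟨η, hη, ?_⟩
  filter_upwards [h] with g h X hX hS x hx
  by_contra! hsparse
  refine h _ (hX.mono candidateZones_le)
    (hx.trans (density_mono (exchangePairs_fiber_subset hij))) ?_
  rintro k l (hkl | hkl)
  · obtain ⟨rfl, rfl⟩ := Prod.mk_inj.1 hkl
    simpa [candidateZones, hij] using hsparse
  · exact hS.mono candidateZones_le le_rfl hkl

theorem SomePairDense.exists_dense_candidates {S : Set (ι × ι)} {i j : ι}
    (h : SomePairDense m (insert (i, j) S)) (hij : i ≠ j) {ε : ℝ} (hε : 0 < ε) :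
    ∃ ε' > 0, ∃ η > 0, ∀ᶠ g in avoiding m, ∀ X : ι → Set (Fin g.1), OrderedZones X →
      ε ≤ density (indepTransversals g.2 X) →
      SparsePairs g.2 X S η →
      ∃ b a, b ∈ X i ∧ a ∈ X j ∧ g.2.Adj b a ∧ ε' ≤ density {z ∈ indepTransversals g.2 X |
        b ∈ sourceCandidates g.2 X i z ∧ a ∈ targetCandidates g.2 X i j z} := by
  obtain ⟨σ, hσ, hpairs⟩ := exists_le_density_exchangePairs m hij hε
  obtain ⟨η, hη, hcand⟩ := h.exists_lt_adjDensity_candidates hij (half_pos hσ)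
  refine ⟨σ / 2 * η * (σ / 2), by positivity, η, hη, ?_⟩
  filter_upwards [hpairs, hcand] with ⟨n, G⟩ hpairs hcand X hX hdense hS
  set K := indepTransversals G X
  set P := {x | σ / 2 ≤ density (Prod.mk x ⁻¹' exchangePairs G K i j)}
  have hedges := mul_le_density_prod (s := {p : (ι → Fin n) × (Fin n × Fin n) |
    p.2.1 ∈ sourceCandidates G X i p.1 ∧ p.2.2 ∈ targetCandidates G X i j p.1 ∧
      G.Adj p.2.1 p.2.2}) hη.le (half_le_density_half_le hσ (hpairs K hdense))
    fun x hx => (hcand X hX hS x hx).le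
  rw [← DensityPreserving.equiv (Equiv.prodComm _ _)] at hedges
  obtain ⟨⟨b, a⟩, hba⟩ := exists_le_density_fiber (by positivity) hedges
  obtain ⟨x, ⟨hb, ha, hadj⟩, -⟩ := nonempty_of_density_pos (hba.trans_lt' (by positivity))
  refine ⟨b, a, hb.1, ha.1, hadj, ?_⟩
  have hpopular := mul_le_density_prod (s := exchangePairs G K i j) (half_pos hσ).le hba
    fun x hx => hx.2
  have hpreserving := (DensityPreserving.update (α := Fin n) i).comp
    (((DensityPreserving.eval i).prodMap (.equiv (Equiv.refl _))).comp
      (.equiv (Equiv.prodComm (ι → Fin n) (ι → Fin n))))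
  rw [← hpreserving]
  refine hpopular.trans (density_mono ?_)
  rintro ⟨x, y⟩ ⟨hxy, ⟨hb, ha, -⟩, -⟩
  exact ⟨hxy.2.1, sourceCandidates_update.ge hb, (targetCandidates_update hij).ge ha⟩

theorem SomePairDense.exists_transition {S : Set (ι × ι)} {i j : ι}
    (h : SomePairDense m (insert (i, j) S)) (hij : i < j) {ε : ℝ} (hε : 0 < ε) :
    ∃ ε' > 0, ∃ η > 0, ∀ᶠ g in avoiding m, ∀ (X : ι → Set (Fin g.1)) (l : List (Fin g.1)),
      OrderedZones X → ε ≤ density (indepTransversals g.2 X) →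
      SparsePairs g.2 X S η → IsStem g.2 l (X i) (⋃ k > i, X k) →
      ∃ (b a : Fin g.1) (X' : ι → Set (Fin g.1)), X' ≤ X ∧
        ε' ≤ density (indepTransversals g.2 X') ∧
        IsStem g.2 (a :: b :: l) (X' j) (⋃ k > j, X' k) := by
  obtain ⟨ε', hε', η, hη, h⟩ := h.exists_dense_candidates hij.ne hε
  refine ⟨ε', hε', η, hη, ?_⟩
  filter_upwards [h] with ⟨n, G⟩ h X l hX hdense hS hl
  obtain ⟨b, a, hb, ha, hba, hdense'⟩ := h X hX hdense hS
  let Y (k : ι) : Set (Fin n) := X k \ G.neighborSet b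
  let X' := Function.update (Function.update (fun k => Y k \ G.neighborSet a) j
    (Y j ∩ laterNeighborSet G a)) i (X i)
  have hX'j : X' j = Y j ∩ laterNeighborSet G a := by simp [X', hij.ne']
  have hX'k {k : ι} (hi : k ≠ i) (hj : k ≠ j) : X' k = Y k \ G.neighborSet a := by
    simp [X', hi, hj]
  have hX' : X' ≤ X := fun k => by
    rcases eq_or_ne k i with rfl | hki
    · simp [X']
    rcases eq_or_ne k j with rfl | hkj
    · exact hX'j.trans_subset (Set.inter_subset_left.trans Set.sdiff_subset)
    · exact (hX'k hki hkj).trans_subset (Set.sdiff_subset.trans Set.sdiff_subset)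
  refine ⟨b, a, X', hX', hdense'.trans (density_mono ?_), ?_⟩
  · rintro z ⟨hz, ⟨-, hbz⟩, -, hja, haz⟩
    refine ⟨fun k => ?_, hz.2⟩
    rcases eq_or_ne k i with rfl | hki
    · simpa [X'] using hz.1 k
    rcases eq_or_ne k j with rfl | hkj
    · exact hX'j ▸ ⟨⟨hz.1 k, hbz k hki⟩, hja⟩
    · exact hX'k hki hkj ▸ ⟨⟨hz.1 k, hbz k hki⟩, haz k hki hkj⟩
  · have hstem := (hl.cons hb).cons ⟨Set.mem_biUnion hij ha, hX hij b hb a ha, hba⟩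
    refine hstem.mono ?_ ?_
    · rw [hX'j]
      exact Set.inter_subset_inter_left _
        (Set.sdiff_subset_sdiff_left (Set.subset_biUnion_of_mem (u := X) hij))
    · refine Set.iUnion₂_subset fun k hk => ?_
      rw [hX'k (hij.trans hk).ne' hk.ne']
      exact Set.sdiff_subset_sdiff_left (Set.sdiff_subset_sdiff_left
        (Set.subset_biUnion_of_mem (u := X) (hij.trans hk)))

end Transition

/-! ### Completing a path -/

theorem exists_hasIndMonPath_of_sparse_triple (m : ℕ) {δ : ℝ} (hδ : 0 < δ) :
    ∃ η > 0, ∀ᶠ g in avoiding m, ∀ (l : List (Fin g.1)) (A B C : Set (Fin g.1)),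
      IsStem g.2 l A (B ∪ C) → Precedes A B → Precedes B C → δ ≤ density A → δ ≤ density B →
      (∀ a ∈ A, δ ≤ density (C \ g.2.neighborSet a)) →
      adjDensity g.2 A B ≤ η → adjDensity g.2 B C ≤ η →
      HasIndMonPath g.2 (l.length + 4) := by
  obtain ⟨ψ, hψ, hlater⟩ := exists_le_density_laterNeighborSet m hδ
  obtain ⟨θ, hθ, hθψδ⟩ : ∃ θ > 0, 2 * θ ≤ min ψ δ := ⟨min ψ δ / 2, by positivity, by linarith⟩
  obtain ⟨hθψ, hθδ⟩ := le_min_iff.1 hθψδ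
  refine ⟨θ ^ 2, by positivity, ?_⟩
  filter_upwards [hlater, eventually_exists_adj hθ]
    with g hlater hadj l A B C hl hAB hBC hA hB hC hABη hBCη
  let P := {b ∈ B | ψ ≤ density (B ∩ laterNeighborSet g.2 b)}
  have hPB : P ⊆ B := Set.sep_subset _ _
  have hPCη := (adjDensity_mono hPB subset_rfl).trans hBCη
  obtain ⟨a, ⟨ha, haB⟩, b, ⟨hb, hbC⟩, hab⟩ := hadj
    {a ∈ A | density (B ∩ g.2.neighborSet a) < θ} {b ∈ P | density (C ∩ g.2.neighborSet b) < θ}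
    (hAB.disjoint.mono (Set.sep_subset _ _) ((Set.sep_subset _ _).trans hPB))
    (by linarith [sub_le_density_of_adjDensity_le_sq hθ hABη])
    (by linarith [sub_le_density_of_adjDensity_le_sq hθ hPCη, hlater B hB])
  obtain ⟨b', hb', c, hc, hbc⟩ := hadj ((B ∩ laterNeighborSet g.2 b) \ g.2.neighborSet a)
    ((C \ g.2.neighborSet a) \ g.2.neighborSet b)
    (hBC.disjoint.mono (fun x hx => hx.1.1) fun x hx => hx.1.1)
    (le_density_sdiff Set.inter_subset_left haB.le (by linarith [hb.2]))
    (le_density_sdiff Set.sdiff_subset hbC.le (by linarith [hC a ha]))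
  have hstem := ((hl.cons ha).cons (b := b) ⟨.inl hb.1, hAB a ha b hb.1, hab⟩).cons (b := b')
    ⟨⟨.inl hb'.1.1, hb'.2⟩, hb'.1.2⟩
  exact (hstem.isDescIndPath c
    ⟨⟨⟨.inr hc.1.1, hc.1.2⟩, hc.2⟩, hBC b' hb'.1.1 c hc.1.1, hbc⟩).hasIndMonPath

theorem exists_stem_of_sparse (m : ℕ) {δ : ℝ} (hδ : 0 < δ) :
    ∃ η > 0, ∃ δ' > 0, ∀ᶠ g in avoiding m, ∀ (l : List (Fin g.1)) (A B C D : Set (Fin g.1)),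
      IsStem g.2 l A (B ∪ (C ∪ D)) → Precedes A B → δ ≤ density A → δ ≤ density B →
      (∀ a ∈ A, δ ≤ density (C \ g.2.neighborSet a) ∧ δ ≤ density (D \ g.2.neighborSet a)) →
      adjDensity g.2 A B ≤ η → adjDensity g.2 B C ≤ η → adjDensity g.2 B D ≤ η →
      ∃ (a b : Fin g.1) (B' C' D' : Set (Fin g.1)), B' ⊆ B ∧ C' ⊆ C ∧ D' ⊆ D ∧
        IsStem g.2 (b :: a :: l) B' (C' ∪ D') ∧ δ' ≤ density B' ∧ δ' ≤ density C' ∧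
        ∀ b' ∈ B', δ' ≤ density (D' \ g.2.neighborSet b') := by
  obtain ⟨ψ, hψ, hlater⟩ := exists_le_density_laterNeighborSet m hδ
  obtain ⟨θ, hθ, hθψδ⟩ : ∃ θ > 0, 3 * θ ≤ min ψ δ := ⟨min ψ δ / 3, by positivity, by linarith⟩
  obtain ⟨hθψ, hθδ⟩ := le_min_iff.1 hθψδ
  refine ⟨θ ^ 2, by positivity, θ, hθ, ?_⟩
  filter_upwards [hlater, eventually_exists_adj hθ]
    with g hlater hadj l A B C D hl hAB hA hB hCD hABη hBCη hBDη
  let P := {b ∈ B | ψ ≤ density (B ∩ laterNeighborSet g.2 b)}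
  let P' := {b ∈ P | density (C ∩ g.2.neighborSet b) < θ}
  have hPB : P ⊆ B := Set.sep_subset _ _
  have hP'B : P' ⊆ B := (Set.sep_subset _ _).trans hPB
  have hP' := sub_le_density_of_adjDensity_le_sq hθ
    ((adjDensity_mono hPB subset_rfl).trans hBCη)
  have hP'D := sub_le_density_of_adjDensity_le_sq hθ
    ((adjDensity_mono hP'B subset_rfl).trans hBDη)
  obtain ⟨a, ⟨ha, haB⟩, b, ⟨⟨hb, hbC⟩, hbD⟩, hab⟩ := hadj
    {a ∈ A | density (B ∩ g.2.neighborSet a) < θ} {b ∈ P' | density (D ∩ g.2.neighborSet b) < θ}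
    (hAB.disjoint.mono (Set.sep_subset _ _) ((Set.sep_subset _ _).trans hP'B))
    (by linarith [sub_le_density_of_adjDensity_le_sq hθ hABη])
    (by linarith [hlater B hB])
  let E := (B ∩ laterNeighborSet g.2 b) \ g.2.neighborSet a
  have hE : 2 * θ ≤ density E :=
    le_density_sdiff Set.inter_subset_left haB.le (by linarith [hb.2])
  have hED := sub_le_density_of_adjDensity_le_sq (A := E) hθ
    ((adjDensity_mono (fun x hx => hx.1.1) subset_rfl).trans hBDη)
  refine ⟨a, b, {b' ∈ E | density (D ∩ g.2.neighborSet b') < θ},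
    (C \ g.2.neighborSet a) \ g.2.neighborSet b, (D \ g.2.neighborSet a) \ g.2.neighborSet b,
    fun x hx => hx.1.1.1, fun x hx => hx.1.1, fun x hx => hx.1.1,
    ((hl.cons ha).cons (b := b) ⟨.inl hb.1, hAB a ha b hb.1, hab⟩).mono ?_ ?_, by linarith,
    le_density_sdiff Set.sdiff_subset hbC.le (by linarith [hCD a ha]), fun b' hb' => ?_⟩
  · exact fun x hx => ⟨⟨.inl hx.1.1.1, hx.1.2⟩, hx.1.1.2⟩
  · rw [← Set.union_sdiff_distrib, ← Set.union_sdiff_distrib]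
    exact Set.sdiff_subset_sdiff_left (Set.sdiff_subset_sdiff_left Set.subset_union_right)
  · have hDa := (hCD a ha).2
    exact le_density_sdiff (Set.sdiff_subset.trans Set.sdiff_subset) hb'.2.le
      (le_density_sdiff Set.sdiff_subset hbD.le (by linarith))

section Assembly

variable {ι : Type*} [LinearOrder ι] [Fintype ι] {S : Set (ι × ι)} {z₁ z₂ z₃ z₄ : ι}

theorem SomePairDense.of_two_transitions (h12 : z₁ < z₂) (h23 : z₂ < z₃) (h34 : z₃ < z₄)
    (hd12 : SomePairDense 7 (insert (z₁, z₂) S)) (hd23 : SomePairDense 7 (insert (z₂, z₃) S)) :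
    SomePairDense 7 S := by
  intro ε hε
  obtain ⟨ε₁, hε₁, hinit⟩ := exists_initial_stem (ι := ι) 7 z₁ hε
  obtain ⟨ε₂, hε₂, η₂, hη₂, htrans₂⟩ := hd12.exists_transition h12 hε₁
  obtain ⟨ε₃, hε₃, η₃, hη₃, htrans₃⟩ := hd23.exists_transition h23 hε₂
  refine ⟨min η₂ η₃, lt_min hη₂ hη₃, ?_⟩
  filter_upwards [hinit, htrans₂, htrans₃, eventually_exists_adj hε₃, eventually_not_hasIndMonPath]
    with g hinit htrans₂ htrans₃ hadj hpath X hX hdense hS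
  obtain ⟨a₁, X₁, hX₁, hl₁, hdense₁⟩ := hinit X hdense
  obtain ⟨b₁, a₂, X₂, hX₂, hdense₂, hl₂⟩ := htrans₂ X₁ _ (hX.mono hX₁) hdense₁
    (hS.mono hX₁ (min_le_left _ _)) hl₁
  have hX₂X := hX₂.trans hX₁
  obtain ⟨b₂, a₃, X₃, hX₃, hdense₃, hl₃⟩ := htrans₃ X₂ _ (hX.mono hX₂X) hdense₂
    (hS.mono hX₂X (min_le_right _ _)) hl₂
  have hprec := (hX.mono (hX₃.trans hX₂X)) h34
  obtain ⟨b, hb, a, ha, hba⟩ := hadj (X₃ z₃) (X₃ z₄) hprec.disjoint (le_density_zone hdense₃ _)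
    (le_density_zone hdense₃ _)
  exact hpath ((hl₃.cons hb).isDescIndPath a
    ⟨Set.mem_biUnion h34 ha, hprec b hb a ha, hba⟩).hasIndMonPath

theorem SomePairDense.of_one_transition (h12 : z₁ < z₂) (h23 : z₂ < z₃) (h34 : z₃ < z₄)
    (hd12 : SomePairDense 7 (insert (z₁, z₂) S)) (hS23 : (z₂, z₃) ∈ S) (hS34 : (z₃, z₄) ∈ S) :
    SomePairDense 7 S := by
  intro ε hε
  obtain ⟨ε₁, hε₁, hinit⟩ := exists_initial_stem (ι := ι) 7 z₁ hε
  obtain ⟨ε₂, hε₂, η₂, hη₂, htrans⟩ := hd12.exists_transition h12 hε₁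
  obtain ⟨η, hη, hfinal⟩ := exists_hasIndMonPath_of_sparse_triple 7 (half_pos hε₂)
  refine ⟨min η η₂, lt_min hη hη₂, ?_⟩
  filter_upwards [hinit, htrans, hfinal, eventually_not_hasIndMonPath]
    with g hinit htrans hfinal hpath X hX hdense hS
  obtain ⟨a₁, X₁, hX₁, hl₁, hdense₁⟩ := hinit X hdense
  obtain ⟨b₁, a₂, X₂, hX₂, hdense₂, hl₂⟩ := htrans X₁ _ (hX.mono hX₁) hdense₁
    (hS.mono hX₁ (min_le_right _ _)) hl₁
  have hX₂X := hX₂.trans hX₁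
  have hord := hX.mono hX₂X
  have hsparse := hS.mono hX₂X (min_le_left _ _)
  set A := {b ∈ X₂ z₂ | ∀ k ≠ z₂, ε₂ / 2 ≤ density (X₂ k \ g.2.neighborSet b)}
  have hA : A ⊆ X₂ z₂ := Set.sep_subset _ _
  exact hpath <| hfinal _ A (X₂ z₃) (X₂ z₄)
    (hl₂.mono hA (Set.union_subset (Set.subset_biUnion_of_mem (u := X₂) h23)
      (Set.subset_biUnion_of_mem (u := X₂) (h23.trans h34))))
    ((hord h23).mono hA subset_rfl) (hord h34) (half_le_density_zone hε₂ hdense₂ z₂)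
    ((half_le_self hε₂.le).trans (le_density_zone hdense₂ _))
    (fun b hb => hb.2 _ (h23.trans h34).ne')
    ((adjDensity_mono hA subset_rfl).trans (hsparse hS23)) (hsparse hS34)

theorem SomePairDense.of_no_transition (h12 : z₁ < z₂) (h23 : z₂ < z₃) (h34 : z₃ < z₄)
    (hS12 : (z₁, z₂) ∈ S) (hS23 : (z₂, z₃) ∈ S) (hS24 : (z₂, z₄) ∈ S) (hS34 : (z₃, z₄) ∈ S) :
    SomePairDense 7 S := by
  intro ε hε
  obtain ⟨ε₁, hε₁, hinit⟩ := exists_initial_stem (ι := ι) 7 z₁ hε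
  obtain ⟨η₁, hη₁, δ, hδ, hstem⟩ := exists_stem_of_sparse 7 (half_pos hε₁)
  obtain ⟨η, hη, hfinal⟩ := exists_hasIndMonPath_of_sparse_triple 7 hδ
  refine ⟨min η η₁, lt_min hη hη₁, ?_⟩
  filter_upwards [hinit, hstem, hfinal, eventually_not_hasIndMonPath]
    with g hinit hstem hfinal hpath X hX hdense hS
  obtain ⟨a₁, X₁, hX₁, hl, hdense₁⟩ := hinit X hdense
  have hord := hX.mono hX₁
  have hsparse := hS.mono hX₁ (min_le_left _ _)
  have hsparse₁ := hS.mono hX₁ (min_le_right _ _)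
  obtain ⟨h13, h14⟩ := And.intro (h12.trans h23) (h12.trans (h23.trans h34))
  have hzone {k : ι} (hk : z₁ < k) : X₁ k ⊆ ⋃ k > z₁, X₁ k := Set.subset_biUnion_of_mem hk
  set A := {b ∈ X₁ z₁ | ∀ k ≠ z₁, ε₁ / 2 ≤ density (X₁ k \ g.2.neighborSet b)}
  have hA : A ⊆ X₁ z₁ := Set.sep_subset _ _
  obtain ⟨b₁, a₂, B, C, D, hB, hC, hD, hl', hBδ, hCδ, hDδ⟩ := hstem _ A (X₁ z₂) (X₁ z₃) (X₁ z₄)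
    (hl.mono hA (Set.union_subset (hzone h12) (Set.union_subset (hzone h13) (hzone h14))))
    ((hord h12).mono hA subset_rfl) (half_le_density_zone hε₁ hdense₁ z₁)
    ((half_le_self hε₁.le).trans (le_density_zone hdense₁ _))
    (fun b hb => ⟨hb.2 _ h13.ne', hb.2 _ h14.ne'⟩)
    ((adjDensity_mono hA subset_rfl).trans (hsparse₁ hS12)) (hsparse₁ hS23) (hsparse₁ hS24)
  exact hpath <| hfinal _ B C D hl' ((hord h23).mono hB hC) ((hord h34).mono hC hD) hBδ hCδ hDδ
    ((adjDensity_mono hB hC).trans (hsparse hS23)) ((adjDensity_mono hC hD).trans (hsparse hS34))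

end Assembly

section Reversal

variable {m k : ℕ} {S : Set (Fin k × Fin k)} {i j : Fin k}

/-- The ordered graph with the order of its vertices reversed. -/
def OrdGraph.reverse (g : OrdGraph) : OrdGraph := ⟨g.1, g.2.comap Fin.rev⟩

theorem hasIndMonPath_of_comap_rev {n : ℕ} {G : SimpleGraph (Fin n)}
    (h : HasIndMonPath (G.comap Fin.rev) m) : HasIndMonPath G m := by
  obtain ⟨v, hv, hadj⟩ := h
  refine ⟨fun i => (v i.rev).rev, fun i j hij => Fin.rev_lt_rev.2 (hv (Fin.rev_lt_rev.2 hij)),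
    fun i j => ?_⟩
  rw [← SimpleGraph.comap_adj, hadj, Fin.val_rev, Fin.val_rev]
  omega

theorem containsBlowup_of_comap_equiv {V W : Type*} (e : V ≃ W) {G : SimpleGraph W} {r t : ℕ}
    (h : ContainsBlowup (G.comap e)ᶜ r t) : ContainsBlowup Gᶜ r t := by
  obtain ⟨A, hcard, hdisj, hadj⟩ := h
  refine ⟨fun i => (A i).map e.toEmbedding, by simpa using hcard,
    fun i j hij => (Finset.disjoint_map _).2 (hdisj i j hij), fun i j hij x hx y hy => ?_⟩
  obtain ⟨a, ha, rfl⟩ := Finset.mem_map.1 hx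
  obtain ⟨b, hb, rfl⟩ := Finset.mem_map.1 hy
  simpa [SimpleGraph.compl_adj] using hadj i j hij a ha b hb

theorem tendsto_reverse_avoiding :
    Filter.Tendsto OrdGraph.reverse (avoiding m) (avoiding m) := by
  rintro s ⟨c, hc, n₀, h⟩
  exact ⟨c, hc, n₀, fun n hn G hpath hblowup => h n hn _ (mt hasIndMonPath_of_comap_rev hpath)
    (mt (containsBlowup_of_comap_equiv Fin.revPerm) hblowup)⟩

/-- The pairs of zones corresponding to those in `S` when the order is reversed. -/
def reversePairs (S : Set (Fin k × Fin k)) : Set (Fin k × Fin k) :=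
  {p | (p.2.rev, p.1.rev) ∈ S}

theorem reversePairs_reversePairs : reversePairs (reversePairs S) = S := by
  ext ⟨i, j⟩; simp [reversePairs]

theorem mem_reversePairs_rev : (j.rev, i.rev) ∈ reversePairs S ↔ (i, j) ∈ S := by
  simp [reversePairs]

theorem reversePairs_insert :
    reversePairs (insert (i, j) S) = insert (j.rev, i.rev) (reversePairs S) := by
  ext ⟨a, b⟩
  simp [reversePairs, Fin.rev_eq_iff, and_comm]

/-- The zones of the reversed graph. -/
def reverseZones {n : ℕ} (X : Fin k → Set (Fin n)) (i : Fin k) : Set (Fin n) :=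
  Fin.rev ⁻¹' X i.rev

theorem OrderedZones.reverse {n : ℕ} {X : Fin k → Set (Fin n)} (h : OrderedZones X) :
    OrderedZones (reverseZones X) := fun _ _ hij u hu v hv =>
  Fin.rev_lt_rev.1 (h (Fin.rev_lt_rev.2 hij) v.rev hv u.rev hu)

theorem density_indepTransversals_reverseZones {n : ℕ} (G : SimpleGraph (Fin n))
    (X : Fin k → Set (Fin n)) :
    density (indepTransversals (G.comap Fin.rev) (reverseZones X)) =
      density (indepTransversals G X) := by
  rw [← DensityPreserving.equiv (Equiv.arrowCongr Fin.revPerm Fin.revPerm)]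
  congr 1
  ext x
  refine and_congr ⟨fun h i => ?_, fun h i => ?_⟩ ⟨fun h i j => ?_, fun h i j => ?_⟩
  · simpa [reverseZones] using h i.rev
  · simpa [reverseZones] using h i.rev
  · simpa using h i.rev j.rev
  · simpa using h i.rev j.rev

theorem adjDensity_preimage_rev {n : ℕ} (G : SimpleGraph (Fin n)) (A B : Set (Fin n)) :
    adjDensity (G.comap Fin.rev) (Fin.rev ⁻¹' A) (Fin.rev ⁻¹' B) = adjDensity G B A := by
  let e := (Equiv.prodComm (Fin n) (Fin n)).trans (Equiv.prodCongr Fin.revPerm Fin.revPerm)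
  rw [adjDensity, adjDensity, ← DensityPreserving.equiv e]
  congr 1
  ext
  simp [e, SimpleGraph.adj_comm, and_left_comm]

theorem SomePairDense.reverse (h : SomePairDense m S) : SomePairDense m (reversePairs S) := by
  intro ε hε
  obtain ⟨η, hη, h⟩ := h ε hε
  refine ⟨η, hη, ?_⟩
  filter_upwards [tendsto_reverse_avoiding.eventually h] with g hg X hX hdense hS
  refine hg (reverseZones X) hX.reverse
    (hdense.trans_eq (density_indepTransversals_reverseZones g.2 X).symm) fun i j hij => ?_
  exact (adjDensity_preimage_rev _ _ _).trans_le (hS (mem_reversePairs_rev.2 hij))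

end Reversal

section Induction

theorem exists_increasing_pattern (p : Fin 5 → Fin 5 → Prop) : ∃ z₁ z₂ z₃ z₄, z₁ < z₂ ∧ z₂ < z₃ ∧
    z₃ < z₄ ∧ (¬ p z₁ z₂ ∧ ¬ p z₂ z₃ ∨ ¬ p z₁ z₂ ∧ p z₂ z₃ ∧ p z₃ z₄ ∨ ¬ p z₃ z₄ ∧ ¬ p z₂ z₃ ∨
      ¬ p z₃ z₄ ∧ p z₂ z₃ ∧ p z₁ z₂ ∨ p z₁ z₂ ∧ p z₂ z₃ ∧ p z₂ z₄ ∧ p z₃ z₄) := by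
  by_contra! h
  have hends {z₁ z₂ z₃ z₄} (h12 : z₁ < z₂) (h23 : z₂ < z₃) (h34 : z₃ < z₄) :
      p z₁ z₂ ↔ p z₃ z₄ := by
    have := h z₁ z₂ z₃ z₄ h12 h23 h34
    tauto
  have h0123 := @hends 0 1 2 3 (by decide) (by decide) (by decide)
  have h0124 := @hends 0 1 2 4 (by decide) (by decide) (by decide)
  have h0134 := @hends 0 1 3 4 (by decide) (by decide) (by decide)
  have h1234 := @hends 1 2 3 4 (by decide) (by decide) (by decide)
  have h012 := (h 0 1 2 3 (by decide) (by decide) (by decide)).1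
  have hnot24 := (h 1 2 3 4 (by decide) (by decide) (by decide)).2.2.2.2
  tauto

theorem somePairDense (S : Set (Fin 5 × Fin 5)) : SomePairDense 7 S := by
  induction S using WellFoundedGT.induction with
  | ind S ih =>
    have hinsert {p} (hp : p ∉ S) : SomePairDense 7 (insert p S) := ih _ (Set.ssubset_insert hp)
    have hreverse {i j} (hij : (i, j) ∉ S) :
        SomePairDense 7 (insert (j.rev, i.rev) (reversePairs S)) :=
      reversePairs_insert ▸ (hinsert hij).reverse
    obtain ⟨z₁, z₂, z₃, z₄, h12, h23, h34, h⟩ := exists_increasing_pattern fun i j => (i, j) ∈ S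
    have hr12 := Fin.rev_lt_rev.2 h12
    have hr23 := Fin.rev_lt_rev.2 h23
    have hr34 := Fin.rev_lt_rev.2 h34
    rcases h with ⟨hS12, hS23⟩ | ⟨hS12, hS23, hS34⟩ | ⟨hS34, hS23⟩ | ⟨hS34, hS23, hS12⟩ |
      ⟨hS12, hS23, hS24, hS34⟩
    · exact .of_two_transitions h12 h23 h34 (hinsert hS12) (hinsert hS23)
    · exact .of_one_transition h12 h23 h34 (hinsert hS12) hS23 hS34
    · rw [← reversePairs_reversePairs (S := S)]
      exact (SomePairDense.of_two_transitions hr34 hr23 hr12 (hreverse hS34)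
        (hreverse hS23)).reverse
    · rw [← reversePairs_reversePairs (S := S)]
      exact (SomePairDense.of_one_transition hr34 hr23 hr12 (hreverse hS34)
        (mem_reversePairs_rev.2 hS23) (mem_reversePairs_rev.2 hS12)).reverse
    · exact .of_no_transition h12 h23 h34 hS12 hS23 hS24 hS34

end Induction

/-! ### Counting cliques of the complement -/

theorem density_div_fiber_le {n q : ℕ} (hq : 0 < q) (z : ℕ) :
    density {v : Fin n | v / q = z} ≤ q / n := by
  have himage : Fin.val '' {v : Fin n | v / q = z} ⊆ Finset.Ico (q * z) (q * z + q) := by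
    rintro _ ⟨v, rfl, rfl⟩
    simp only [Finset.coe_Ico, Set.mem_Ico]
    exact ⟨Nat.mul_div_le v q, Nat.lt_mul_div_succ v hq⟩
  have hcard := Set.ncard_le_ncard himage
  rw [Set.ncard_image_of_injective _ Fin.val_injective, Set.ncard_coe_finset, Nat.card_Ico,
    Nat.add_sub_cancel_left] at hcard
  rw [density, Fintype.card_fin]
  gcongr

theorem exists_monotone_density_fiber_le {δ : ℝ} (hδ : 0 < δ) : ∃ K : ℕ, 0 < K ∧ ∃ N : ℕ,
    ∀ n ≥ N, ∃ f : Fin n → Fin K, Monotone f ∧ ∀ z, density (f ⁻¹' {z}) ≤ δ := by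
  obtain ⟨K, hK⟩ := exists_nat_gt (2 / δ)
  have hK0 : (0 : ℝ) < K := (by positivity : 0 < 2 / δ).trans hK
  have hK0' : 0 < K := Nat.cast_pos.1 hK0
  refine ⟨K, hK0', K, fun n hn => ?_⟩
  have hKn : (K : ℝ) ≤ n := Nat.cast_le.2 hn
  have hn0 : (0 : ℝ) < n := hK0.trans_le hKn
  have hlt (v : Fin n) : v / (n / K + 1) < K :=
    Nat.div_lt_of_lt_mul (v.2.trans ((Nat.lt_mul_div_succ n hK0').trans_eq (mul_comm _ _)))
  refine ⟨fun v => ⟨v / (n / K + 1), hlt v⟩, fun u v huv => Nat.div_le_div_right huv, fun z => ?_⟩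
  calc _ = density {v : Fin n | v / (n / K + 1) = (z : ℕ)} := by congr 1; ext; simp [Fin.ext_iff]
    _ ≤ (n / K + 1 : ℕ) / n := density_div_fiber_le (Nat.succ_pos _) z
    _ ≤ (n / K + n / K) / n := by
        push_cast
        gcongr
        · exact Nat.cast_div_le
        · exact (one_le_div hK0).2 hKn
    _ = 2 / K := by field_simp; norm_num
    _ ≤ δ := ((div_lt_comm₀ hδ hK0).1 hK).le

theorem density_not_injective_comp_le {α κ ι : Type*} [Fintype α] [Fintype ι] [DecidableEq ι]
    {f : α → κ} {δ : ℝ} (hδ : 0 ≤ δ) (hf : ∀ z, density (f ⁻¹' {z}) ≤ δ) :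
    density {x : ι → α | ¬ Function.Injective (f ∘ x)} ≤ Fintype.card ι ^ 2 * δ := by
  let s (p : ι × ι) : Set (ι → α) := {x | p.1 ≠ p.2 ∧ f (x p.1) = f (x p.2)}
  have hs (p : ι × ι) : density (s p) ≤ δ := by
    rw [← DensityPreserving.update p.2]
    refine density_prod_le hδ fun a => ?_
    calc _ ≤ density ((fun x : ι → α => x p.1) ⁻¹' (f ⁻¹' {f a})) :=
          density_mono fun x hx => by
            obtain ⟨hne, hx⟩ : p.1 ≠ p.2 ∧ _ := hx
            simpa [hne] using hx
      _ ≤ δ := (DensityPreserving.eval p.1 _).trans_le (hf _)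
  have hunion : {x : ι → α | ¬ Function.Injective (f ∘ x)} ⊆ ⋃ p, s p := fun x hx => by
    obtain ⟨i, j, hij, hne⟩ := Function.not_injective_iff.1 hx
    exact Set.mem_iUnion.2 ⟨(i, j), hne, hij⟩
  calc _ ≤ ∑ p, density (s p) := (density_mono hunion).trans (density_iUnion_le s)
    _ ≤ ∑ _p : ι × ι, δ := Finset.sum_le_sum fun p _ => hs p
    _ = Fintype.card ι ^ 2 * δ := by simp [sq]

theorem SomePairDense.eventually_density_lt {ι : Type*} [Fintype ι] [LinearOrder ι] {m : ℕ}
    (h : SomePairDense m (∅ : Set (ι × ι))) {ε : ℝ} (hε : 0 < ε) : ∀ᶠ g in avoiding m,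
      density {x : ι → Fin g.1 | StrictMono x ∧ ∀ i j, ¬ g.2.Adj (x i) (x j)} < ε := by
  obtain ⟨δ, hδ, hδε⟩ : ∃ δ > 0, Fintype.card ι ^ 2 * δ ≤ ε / 2 :=
    ⟨ε / 2 / (Fintype.card ι ^ 2 + 1), by positivity, by
      rw [mul_div_assoc', div_le_iff₀ (by positivity)]
      linarith⟩
  obtain ⟨K, hK, N, hpartition⟩ := exists_monotone_density_fiber_le hδ
  have : NeZero K := ⟨hK.ne'⟩
  obtain ⟨η, -, hfamily⟩ := h (ε / 2 / Fintype.card (ι → Fin K)) (by positivity)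
  filter_upwards [hfamily, eventually_ge_card N] with ⟨n, G⟩ hfamily hn
  obtain ⟨f, hf, hfiber⟩ := hpartition n hn
  by_contra! hdense
  let s : Set (ι → Fin n) := {x | StrictMono x ∧ ∀ i j, ¬ G.Adj (x i) (x j)}
  let t : Set (ι → Fin n) := {x | ¬ Function.Injective (f ∘ x)}
  have hgood : ε / 2 ≤ density (s \ t) := by
    linarith [density_sub_le_density_sdiff s t, density_not_injective_comp_le (ι := ι) hδ.le hfiber]
  obtain ⟨z, hz⟩ := exists_le_density_inter_fiber (fun x => f ∘ x) (s \ t)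
  have hzdense := (div_le_div_of_nonneg_right hgood (by positivity)).trans hz
  obtain ⟨x, ⟨⟨hx, -⟩, hxt⟩, rfl⟩ := nonempty_of_density_pos (hzdense.trans_lt' (by positivity))
  have hmono : StrictMono (f ∘ x) := (hf.comp hx.monotone).strictMono_of_injective (not_not.1 hxt)
  refine hfamily (fun i => f ⁻¹' {f (x i)}) (fun i j hij u hu v hv => hf.reflect_lt ?_)
    (hzdense.trans (density_mono fun y hy => ⟨fun i => congrFun hy.2 i, hy.1.1.2⟩))
    fun _ _ => False.elim
  rw [hu, hv]
  exact hmono hij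

theorem cliqueCount_compl_le {n : ℕ} (G : SimpleGraph (Fin n)) (r : ℕ) : (cliqueCount Gᶜ r : ℝ) ≤
    density {x : Fin r → Fin n | StrictMono x ∧ ∀ i j, ¬ G.Adj (x i) (x j)} * n ^ r := by
  have hcard : (Fintype.card (Fin r → Fin n) : ℝ) = n ^ r := by simp
  rw [← hcard, density_mul_card, cliqueCount, ← Nat.card_coe_set_eq, ← Nat.card_coe_set_eq,
    Nat.cast_le]
  refine Nat.card_le_card_of_injective (fun s => ⟨s.1.orderEmbOfFin s.2.1,
    (s.1.orderEmbOfFin s.2.1).strictMono, fun i j hij => ?_⟩) fun s t hst => ?_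
  · exact ((SimpleGraph.compl_adj _ _ _).1 (s.2.2 (s.1.orderEmbOfFin_mem s.2.1 i)
      (s.1.orderEmbOfFin_mem s.2.1 j) hij.ne)).2 hij
  · refine Subtype.ext (Finset.coe_injective ?_)
    rw [← s.1.range_orderEmbOfFin s.2.1, ← t.1.range_orderEmbOfFin t.2.1]
    exact congrArg Set.range (Subtype.ext_iff.1 hst)

theorem stmt_1 (ε : ℝ) (hε : 0 < ε) :
    ∃ c : ℝ, 0 < c ∧ ∃ n₀ : ℕ, ∀ n : ℕ, n₀ ≤ n →
      ∀ G : SimpleGraph (Fin n),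
        ¬ HasIndMonPath G 7 →
        ε * (n : ℝ) ^ 5 ≤ (cliqueCount Gᶜ 5 : ℝ) →
        ContainsBlowup Gᶜ 2 ⌈c * (n : ℝ) / Real.log n⌉₊ := by
  obtain ⟨c, hc, n₀, h⟩ := (somePairDense ∅).eventually_density_lt hε
  refine ⟨c, hc, max n₀ 1, fun n hn G hpath hcliques => ?_⟩
  by_contra hblowup
  have hn0 : (0 : ℝ) < n := by exact_mod_cast le_of_max_le_right hn
  have hlt := h n (le_of_max_le_left hn) G hpath hblowup
  exact (hcliques.trans (cliqueCount_compl_le G 5)).not_gt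
    (mul_lt_mul_of_pos_right hlt (by positivity))
end

section
/- For every integer k ≥ 3 and every real c > 0 there exists η > 0 such that for all sufficiently large n there exists an ordered graph G on n vertices with the following three properties: (i) G contains no induced monotone path P_{2k−1}; (ii) the complement Ḡ of G contains at least η·n^{⌊k²/4⌋} copies of K_{⌊k²/4⌋}; (iii) Ḡ contains no K_2[t] with t = ⌈c·n/log n⌉. -/
/-!
A union of 13 random permutations and their inverses gives a graph of degree at most 26 on `3 * q`
points in which every set of at most `q` points doubles. Place a copy of these points on each of
many levels and order the resulting points by walks: `u` lies below `v` if the graph has a walk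
from `u` to `v` with as many steps as there are levels between them. The comparability graph of
this order has no induced monotone `P_3`, by transitivity. Two sets of more than twice the size of
a level always contain comparable points: for a suitable level, walks up from the lower half of one
set and walks down from the upper half of the other each reach more than half of that level. With
`h` a small multiple of `log n` and levels of size about `n / log n`, a point is comparable to at
most `h * 26 ^ h` points of the first `h` levels, far fewer than the linearly many points that these
levels contain, so greedily there are of order `n ^ r` antichains of size `r`.
-/

open Finset
open scoped Nat

section PermCounting

theorem descFactorial_mul_pow_le {a b : ℕ} (h : a ≤ b) (m : ℕ) :
    a.descFactorial m * b ^ m ≤ b.descFactorial m * a ^ m := by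
  have hprod (x : ℕ) : x ^ m = ∏ _i ∈ range m, x := by rw [prod_const, card_range]
  rw [Nat.descFactorial_eq_prod_range, Nat.descFactorial_eq_prod_range, hprod a, hprod b,
    ← prod_mul_distrib, ← prod_mul_distrib]
  refine prod_le_prod' fun i _ => ?_
  rw [Nat.sub_mul, Nat.sub_mul, mul_comm a b]
  exact Nat.sub_le_sub_left (Nat.mul_le_mul_left i h) _

theorem choose_mul_pow_le_choose_mul_pow {a b : ℕ} (h : a ≤ b) (m : ℕ) :
    a.choose m * b ^ m ≤ b.choose m * a ^ m := by
  refine Nat.le_of_mul_le_mul_left ?_ m.factorial_pos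
  simpa only [Nat.descFactorial_eq_factorial_mul_choose, mul_assoc]
    using descFactorial_mul_pow_le h m

theorem centralBinom_div_choose_le {b m : ℕ} (hm : 3 * m ≤ b) :
    (m.centralBinom / b.choose m : ℝ) ≤ (2 / 3) ^ m := by
  have hratio : m.centralBinom * 3 ^ m ≤ (3 * m).choose m * 2 ^ m := by
    refine Nat.le_of_mul_le_mul_right ?_ m.pow_self_pos
    have := choose_mul_pow_le_choose_mul_pow (a := 2 * m) (b := 3 * m) (by omega) m
    rwa [mul_pow, mul_pow, ← mul_assoc, ← mul_assoc] at this
  have hle : m.centralBinom * 3 ^ m ≤ b.choose m * 2 ^ m :=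
    hratio.trans (Nat.mul_le_mul_right _ (Nat.choose_le_choose m hm))
  have hpos : (0 : ℝ) < b.choose m := by exact_mod_cast Nat.choose_pos (by omega)
  rw [div_pow, div_le_div_iff₀ hpos (by positivity), mul_comm (2 ^ m : ℝ)]
  exact_mod_cast hle

-- Ten of the thirteen factors beat `16 ^ m`; the other three cancel the two binomials in `b`.
theorem choose_mul_choose_mul_pow_le {b m : ℕ} (hm : 3 * m ≤ b) :
    (b.choose m * b.choose (2 * m) : ℝ) * (m.centralBinom / b.choose m) ^ 13 ≤ (1 / 3) ^ m := by
  have hpos : (0 : ℝ) < b.choose m := by exact_mod_cast Nat.choose_pos (by omega)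
  have hcentral : (m.centralBinom : ℝ) ≤ 4 ^ m := by exact_mod_cast m.centralBinom_le_four_pow
  have htwo : (b.choose (2 * m) * m.centralBinom : ℝ) ≤ b.choose m ^ 2 := by
    have hsub : b.choose (2 * m) * m.centralBinom ≤ b.choose m * b.choose m := by
      rw [Nat.centralBinom, Nat.choose_mul (by omega), show 2 * m - m = m by omega]
      exact Nat.mul_le_mul_left _ (Nat.choose_le_choose _ (by omega))
    rw [sq]
    exact_mod_cast hsub
  set p : ℝ := m.centralBinom / b.choose m with hp
  have : 0 ≤ p := by positivity
  have hcancel₁ : b.choose m * p = m.centralBinom := by rw [hp]; field_simp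
  have hcancel₂ : b.choose (2 * m) * p ^ 2 ≤ m.centralBinom := by
    rw [hp, div_pow, mul_div_assoc', div_le_iff₀ (by positivity)]
    calc (b.choose (2 * m) * m.centralBinom ^ 2 : ℝ)
        = m.centralBinom * (b.choose (2 * m) * m.centralBinom) := by ring
      _ ≤ m.centralBinom * b.choose m ^ 2 := by gcongr
  calc (b.choose m * b.choose (2 * m) : ℝ) * p ^ 13
      = (b.choose m * p) * (b.choose (2 * m) * p ^ 2) * p ^ 10 := by ring
    _ ≤ 4 ^ m * 4 ^ m * ((2 / 3) ^ m) ^ 10 := by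
        rw [hcancel₁]
        gcongr
        · exact hcancel₂.trans hcentral
        · exact centralBinom_div_choose_le hm
    _ = (16 * (2 / 3) ^ 10) ^ m := by
        rw [← mul_pow, ← pow_mul, mul_comm m, pow_mul, ← mul_pow]
        norm_num
    _ ≤ (1 / 3) ^ m := by gcongr; norm_num

theorem exists_perm_map_eq {α : Type*} [Finite α] {X Z : Finset α} (h : #X = #Z) :
    ∃ τ : Equiv.Perm α, X.map τ.toEmbedding = Z := by
  classical
  let e := Finset.equivOfCardEq h
  refine ⟨e.extendSubtype, eq_of_subset_of_card_le ?_ (by rw [card_map, h])⟩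
  intro y hy
  obtain ⟨x, hx, rfl⟩ := mem_map.1 hy
  exact e.extendSubtype_mem x hx

variable {α : Type*} [Fintype α] [DecidableEq α]

theorem card_perm_map_subset_mul_choose (X Y : Finset α) :
    #{σ : Equiv.Perm α | X.map σ.toEmbedding ⊆ Y} * (Fintype.card α).choose #X =
      (Fintype.card α)! * (#Y).choose #X := by
  have hconst : ∀ Z ∈ powersetCard #X univ,
      #{σ : Equiv.Perm α | Z.map σ.toEmbedding ⊆ Y} =
        #{σ : Equiv.Perm α | X.map σ.toEmbedding ⊆ Y} := by
    intro Z hZ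
    obtain ⟨τ, rfl⟩ := exists_perm_map_eq (mem_powersetCard_univ.1 hZ).symm
    refine card_equiv (Equiv.mulRight τ) fun σ => ?_
    simp only [mem_filter_univ, map_map, Equiv.coe_mulRight]
    rfl
  have hpre : ∀ σ : Equiv.Perm α,
      #{Z ∈ powersetCard #X univ | Z.map σ.toEmbedding ⊆ Y} = (#Y).choose #X := by
    intro σ
    rw [← card_map σ.symm.toEmbedding (s := Y), ← card_powersetCard]
    congr 1
    ext Z
    rw [mem_filter, mem_powersetCard_univ, mem_powersetCard, subset_map_symm, and_comm]
  have hdouble := sum_card_bipartiteAbove_eq_sum_card_bipartiteBelow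
    (s := (univ : Finset (Equiv.Perm α))) (t := powersetCard #X univ)
    fun σ Z => Z.map σ.toEmbedding ⊆ Y
  simp only [bipartiteAbove, bipartiteBelow, hpre, sum_congr rfl hconst, sum_const, smul_eq_mul,
    card_powersetCard, card_univ, Fintype.card_perm] at hdouble
  rw [hdouble, mul_comm]

theorem card_perm_map_subset_eq (X Y : Finset α) :
    (#{σ : Equiv.Perm α | X.map σ.toEmbedding ⊆ Y} : ℝ) =
      (Fintype.card α)! * ((#Y).choose #X / (Fintype.card α).choose #X) := by
  have hpos : ((Fintype.card α).choose #X : ℝ) ≠ 0 := by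
    exact_mod_cast (Nat.choose_pos (card_le_univ X)).ne'
  rw [mul_div_assoc', eq_div_iff hpos]
  exact_mod_cast card_perm_map_subset_mul_choose X Y

theorem card_perms_map_subset_le (m : ℕ) (hm : 3 * m ≤ Fintype.card α) :
    (#{σ : Fin 13 → Equiv.Perm α | ∃ X Y : Finset α, #X = m ∧ #Y = 2 * m ∧
      ∀ i, X.map (σ i).toEmbedding ⊆ Y} : ℝ) ≤ (1 / 3) ^ m * (Fintype.card α)! ^ 13 := by
  let P : Finset (Finset α × Finset α) := powersetCard m univ ×ˢ powersetCard (2 * m) univ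
  let S (p : Finset α × Finset α) : Finset (Fin 13 → Equiv.Perm α) :=
    Fintype.piFinset fun _ => {σ : Equiv.Perm α | p.1.map σ.toEmbedding ⊆ p.2}
  have hcover : ({σ : Fin 13 → Equiv.Perm α | ∃ X Y : Finset α, #X = m ∧ #Y = 2 * m ∧
      ∀ i, X.map (σ i).toEmbedding ⊆ Y} : Finset _) ⊆ P.biUnion S := by
    intro σ hσ
    obtain ⟨X, Y, hX, hY, hXY⟩ := (mem_filter_univ σ).1 hσ
    exact mem_biUnion.2 ⟨(X, Y), by simp [P, hX, hY], by simpa [S] using hXY⟩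
  have hS : ∀ p ∈ P, (#(S p) : ℝ) =
      (Fintype.card α)! ^ 13 * (m.centralBinom / (Fintype.card α).choose m) ^ 13 := by
    intro p hp
    obtain ⟨hp₁, hp₂⟩ := mem_product.1 hp
    rw [mem_powersetCard_univ] at hp₁ hp₂
    simp only [S, Fintype.card_piFinset, prod_const, card_univ, Fintype.card_fin, Nat.cast_pow,
      card_perm_map_subset_eq, hp₁, hp₂, mul_pow, Nat.centralBinom]
  calc _ ≤ (∑ p ∈ P, #(S p) : ℝ) := by
        exact_mod_cast (card_le_card hcover).trans card_biUnion_le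
    _ = (Fintype.card α).choose m * (Fintype.card α).choose (2 * m) *
          (m.centralBinom / (Fintype.card α).choose m) ^ 13 * (Fintype.card α)! ^ 13 := by
        rw [sum_congr rfl hS, sum_const, card_product, card_powersetCard, card_powersetCard,
          card_univ, nsmul_eq_mul, Nat.cast_mul]
        ring
    _ ≤ _ := by gcongr; exact choose_mul_choose_mul_pow_le hm

end PermCounting

section Expander

/-- `E`, read as a neighbourhood function, at least doubles every set of at most `q` points. -/
def IsDoubling {α : Type*} [DecidableEq α] (E : α → Finset α) (q : ℕ) : Prop :=
  ∀ X : Finset α, #X ≤ q → 2 * #X ≤ #(X.biUnion E)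

theorem IsDoubling.mono {α : Type*} [DecidableEq α] {E F : α → Finset α} {q : ℕ}
    (hE : IsDoubling E q) (hEF : ∀ x, E x ⊆ F x) : IsDoubling F q := fun X hX =>
  (hE X hX).trans (card_le_card (biUnion_mono fun x _ => hEF x))

variable (α : Type*) [Fintype α] [DecidableEq α]

-- A tuple of permutations violating the conclusion maps some `m`-set into some `2 * m`-set, with
-- `0 < m ≤ card α / 3`; such tuples make up a proportion of at most `∑ m, (1 / 3) ^ m ≤ 1 / 2`.
theorem exists_perms_isDoubling :
    ∃ σ : Fin 13 → Equiv.Perm α,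
      IsDoubling (fun x => univ.image fun i => σ i x) (Fintype.card α / 3) := by
  by_contra! hcon
  let K := Fintype.card α / 3
  let bad (m : ℕ) : Finset (Fin 13 → Equiv.Perm α) :=
    {σ | ∃ X Y : Finset α, #X = m ∧ #Y = 2 * m ∧ ∀ i, X.map (σ i).toEmbedding ⊆ Y}
  have hcover : (univ : Finset (Fin 13 → Equiv.Perm α)) ⊆ (Ico 1 (K + 1)).biUnion bad := by
    intro σ _
    have hσ := hcon σ
    simp only [IsDoubling, not_forall, not_le] at hσ
    obtain ⟨X, hX, hlt⟩ := hσ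
    obtain ⟨Y, hY, -, hYcard⟩ := exists_subsuperset_card_eq (subset_univ _) hlt.le
      (by rw [card_univ]; omega)
    refine mem_biUnion.2 ⟨#X, mem_Ico.2 ⟨by omega, Nat.lt_succ_of_le hX⟩,
      (mem_filter_univ σ).2 ⟨X, Y, rfl, hYcard, fun i y hy => hY ?_⟩⟩
    obtain ⟨x, hx, rfl⟩ := mem_map.1 hy
    exact mem_biUnion.2 ⟨x, hx, mem_image_of_mem _ (mem_univ i)⟩
  have hbad : ∀ m ∈ Ico 1 (K + 1), (#(bad m) : ℝ) ≤ (1 / 3) ^ m * (Fintype.card α)! ^ 13 :=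
    fun m hm => card_perms_map_subset_le m (by have := (mem_Ico.1 hm).2; omega)
  have hgeom : ∑ m ∈ Ico 1 (K + 1), (1 / 3 : ℝ) ^ m ≤ 1 / 2 :=
    (geom_sum_Ico_le_of_lt_one (by norm_num) (by norm_num)).trans (by norm_num)
  have hpos : (0 : ℝ) < (Fintype.card α)! ^ 13 := by positivity
  have htotal : ((Fintype.card α)! ^ 13 : ℝ) ≤ 1 / 2 * (Fintype.card α)! ^ 13 := by
    calc ((Fintype.card α)! ^ 13 : ℝ) = #(univ : Finset (Fin 13 → Equiv.Perm α)) := by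
          simp [Fintype.card_perm]
      _ ≤ ∑ m ∈ Ico 1 (K + 1), (#(bad m) : ℝ) := by
          exact_mod_cast (card_le_card hcover).trans card_biUnion_le
      _ ≤ ∑ m ∈ Ico 1 (K + 1), (1 / 3 : ℝ) ^ m * (Fintype.card α)! ^ 13 := sum_le_sum hbad
      _ ≤ 1 / 2 * (Fintype.card α)! ^ 13 := by rw [← sum_mul]; gcongr
  linarith

theorem exists_symmetric_isDoubling :
    ∃ E : α → Finset α, (∀ x y, y ∈ E x → x ∈ E y) ∧ (∀ x, #(E x) ≤ 26) ∧
      IsDoubling E (Fintype.card α / 3) := by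
  obtain ⟨σ, hσ⟩ := exists_perms_isDoubling α
  refine ⟨fun x => univ.image (fun i => σ i x) ∪ univ.image (fun i => (σ i).symm x), ?_, ?_,
    hσ.mono fun x => subset_union_left⟩
  · intro x y h
    simp only [mem_union, mem_image, mem_univ, true_and] at h ⊢
    exact h.symm.imp (Exists.imp fun i hi => by rw [← hi, Equiv.apply_symm_apply])
      (Exists.imp fun i hi => by rw [← hi, Equiv.symm_apply_apply])
  · intro x
    exact (card_union_le _ _).trans (add_le_add (card_image_le (s := (univ : Finset (Fin 13))))
      (card_image_le (s := (univ : Finset (Fin 13)))))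

end Expander

section WalkEnds

variable {α : Type*} [DecidableEq α]

/-- The endpoints of the walks of length `j` from `x` in the graph with neighbourhoods `E`. -/
def walkEnds (E : α → Finset α) : ℕ → α → Finset α
  | 0, x => {x}
  | j + 1, x => (walkEnds E j x).biUnion E

variable {E : α → Finset α} {i j q : ℕ} {x y z : α}

theorem walkEnds_trans (hy : y ∈ walkEnds E i x) (hz : z ∈ walkEnds E j y) :
    z ∈ walkEnds E (i + j) x := by
  induction j generalizing z with
  | zero => rwa [mem_singleton.1 hz]
  | succ j ih =>
    obtain ⟨w, hw, hzw⟩ := mem_biUnion.1 hz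
    exact mem_biUnion.2 ⟨w, ih hw, hzw⟩

theorem walkEnds_symm (hE : ∀ x y, y ∈ E x → x ∈ E y) (h : y ∈ walkEnds E j x) :
    x ∈ walkEnds E j y := by
  induction j generalizing y with
  | zero => exact mem_singleton.2 (mem_singleton.1 h).symm
  | succ j ih =>
    obtain ⟨z, hz, hy⟩ := mem_biUnion.1 h
    have hyz : z ∈ walkEnds E 1 y := by simpa [walkEnds] using hE z y hy
    rw [add_comm]
    exact walkEnds_trans hyz (ih hz)

theorem card_walkEnds_le {D : ℕ} (hD : ∀ x, #(E x) ≤ D) (j : ℕ) (x : α) :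
    #(walkEnds E j x) ≤ D ^ j := by
  induction j with
  | zero => simp [walkEnds]
  | succ j ih =>
    rw [walkEnds, pow_succ]
    exact (card_biUnion_le_card_mul _ _ _ fun y _ => hD y).trans (Nat.mul_le_mul_right _ ih)

theorem IsDoubling.min_le_card_biUnion_walkEnds (hE : IsDoubling E q) (j : ℕ) (X : Finset α) :
    min (2 ^ j * #X) (2 * q) ≤ #(X.biUnion (walkEnds E j)) := by
  induction j with
  | zero => simp [walkEnds]
  | succ j ih =>
    have hstep : X.biUnion (walkEnds E (j + 1)) = (X.biUnion (walkEnds E j)).biUnion E := by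
      simp only [walkEnds, biUnion_biUnion]
    rw [hstep, pow_succ']
    rcases le_total #(X.biUnion (walkEnds E j)) q with hsmall | hlarge
    · have := hE _ hsmall
      rw [mul_assoc]
      omega
    · obtain ⟨Y, hYsub, hYcard⟩ := exists_subset_card_eq hlarge
      calc min (2 * 2 ^ j * #X) (2 * q) ≤ 2 * #Y := (min_le_right _ _).trans_eq (by rw [hYcard])
        _ ≤ #(Y.biUnion E) := hE Y hYcard.le
        _ ≤ _ := card_le_card (biUnion_subset_biUnion_of_subset_left _ hYsub)

-- If the walks reach at most half of `α`, then doubling leaves at most `card α / 2 ^ (j + 1)`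
-- starting points for the walks of length `j`, so `card α` walks in total.
theorem IsDoubling.card_lt_two_mul_card_biUnion_walkEnds [Fintype α] (hE : IsDoubling E q)
    (hq : Fintype.card α < 4 * q) (S : Finset (ℕ × α)) (hS : Fintype.card α < #S) :
    Fintype.card α < 2 * #(S.biUnion fun a => walkEnds E a.1 a.2) := by
  by_contra! hhalf
  have hstart : ∀ j, #{a ∈ S | a.1 = j} ≤ Fintype.card α / 2 ^ (j + 1) := by
    intro j
    let X := {a ∈ S | a.1 = j}.image Prod.snd
    have hXcard : #X = #{a ∈ S | a.1 = j} := card_image_of_injOn fun a ha b hb hab =>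
      Prod.ext (((mem_filter.1 ha).2).trans (mem_filter.1 hb).2.symm) hab
    have hXsub : X.biUnion (walkEnds E j) ⊆ S.biUnion fun a => walkEnds E a.1 a.2 := by
      simp only [X, image_biUnion]
      refine biUnion_subset.2 fun a ha => ?_
      obtain ⟨haS, rfl⟩ := mem_filter.1 ha
      exact subset_biUnion_of_mem (fun a : ℕ × α => walkEnds E a.1 a.2) haS
    have hgrow := (hE.min_le_card_biUnion_walkEnds j X).trans (card_le_card hXsub)
    rw [← hXcard, Nat.le_div_iff_mul_le (by positivity), pow_succ, ← mul_assoc, mul_comm #X]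
    omega
  let K := S.sup Prod.fst
  have hSsum : #S = ∑ j ∈ range (K + 1), #{a ∈ S | a.1 = j} :=
    card_eq_sum_card_fiberwise fun a ha =>
      mem_coe.2 (mem_range_succ_iff.2 (le_sup (f := Prod.fst) ha))
  have hgeom : ∑ j ∈ range (K + 1), Fintype.card α / 2 ^ (j + 1) ≤ Fintype.card α := by
    have := Nat.geom_sum_Ico_le (b := 2) le_rfl (Fintype.card α) (K + 2)
    rw [sum_Ico_eq_sum_range] at this
    simpa [add_comm] using this
  exact absurd (hSsum.trans_le ((sum_le_sum fun j _ => hstart j).trans hgeom)) (not_le.2 hS)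

end WalkEnds

section LayerOrder

theorem exists_le_card_filter_le_and_ge {ι β : Type*} [LinearOrder β] (f : ι → β) {A : Finset ι}
    (hA : A.Nonempty) {N : ℕ} (hN : 2 * N ≤ #A) :
    ∃ s, N ≤ #{a ∈ A | f a ≤ s} ∧ N ≤ #{a ∈ A | s ≤ f a} := by
  let T := {a ∈ A | N ≤ #{b ∈ A | f b ≤ f a}}
  have hT : T.Nonempty := by
    obtain ⟨m, hmA, hm⟩ := A.exists_max_image f hA
    refine ⟨m, mem_filter.2 ⟨hmA, ?_⟩⟩
    rw [filter_true_of_mem hm]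
    omega
  obtain ⟨a, haT, hmin⟩ := T.exists_min_image f hT
  refine ⟨f a, (mem_filter.1 haT).2, ?_⟩
  have hbelow : #{b ∈ A | f b < f a} ≤ N := by
    rcases (A.filter fun b => f b < f a).eq_empty_or_nonempty with hempty | hne
    · simp [hempty]
    · obtain ⟨m, hm, hmax⟩ := exists_max_image _ f hne
      obtain ⟨hmA, hma⟩ := mem_filter.1 hm
      by_contra! hlt
      refine hma.not_ge (hmin m (mem_filter.2 ⟨hmA, hlt.le.trans (card_le_card fun b hb => ?_)⟩))
      exact mem_filter.2 ⟨(mem_filter.1 hb).1, hmax b hb⟩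
  have hsplit := card_filter_add_card_filter_not (s := A) fun b => f a ≤ f b
  simp only [not_le] at hsplit
  omega

variable {α : Type*} [DecidableEq α]

/-- The order on `ℕ × α` (level, position) generated by placing `(l, x)` below `(l + 1, y)` for all
`y ∈ E x`: one climbs from `u` to `v` by a walk with as many steps as there are levels between. -/
def LayerLE (E : α → Finset α) (u v : ℕ × α) : Prop :=
  u.1 ≤ v.1 ∧ v.2 ∈ walkEnds E (v.1 - u.1) u.2

variable {E : α → Finset α} {u v w : ℕ × α} {q : ℕ}

theorem LayerLE.trans (huv : LayerLE E u v) (hvw : LayerLE E v w) : LayerLE E u w := by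
  refine ⟨huv.1.trans hvw.1, ?_⟩
  have := walkEnds_trans huv.2 hvw.2
  rwa [add_comm, Nat.sub_add_sub_cancel hvw.1 huv.1] at this

theorem LayerLE.eq_or_fst_lt (h : LayerLE E u v) : u = v ∨ u.1 < v.1 := by
  rcases h.1.eq_or_lt with heq | hlt
  · refine Or.inl (Prod.ext heq ?_)
    have := h.2
    rw [heq, Nat.sub_self] at this
    exact (mem_singleton.1 this).symm
  · exact Or.inr hlt

theorem mem_walkEnds_dist_of_layerLE (hE : ∀ x y, y ∈ E x → x ∈ E y)
    (h : LayerLE E u v ∨ LayerLE E v u) : v.2 ∈ walkEnds E (Nat.dist u.1 v.1) u.2 := by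
  rcases h with ⟨hle, hmem⟩ | ⟨hle, hmem⟩
  · rwa [Nat.dist_eq_sub_of_le hle]
  · rw [Nat.dist_eq_sub_of_le_right hle]
    exact walkEnds_symm hE hmem

theorem card_le_of_forall_layerLE (hE : ∀ x y, y ∈ E x → x ∈ E y) {D : ℕ} (hD : ∀ x, #(E x) ≤ D)
    (hDpos : 0 < D) {h : ℕ} (hu : u.1 < h) {S : Finset (ℕ × α)} (hS : ∀ v ∈ S, v.1 < h)
    (hcomp : ∀ v ∈ S, LayerLE E u v ∨ LayerLE E v u) : #S ≤ h * D ^ h := by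
  let ends (l : ℕ) : Finset (ℕ × α) := {l} ×ˢ walkEnds E (Nat.dist u.1 l) u.2
  have hsub : S ⊆ (range h).biUnion ends := fun v hv =>
    mem_biUnion.2 ⟨v.1, mem_range.2 (hS v hv), mem_product.2
      ⟨mem_singleton_self _, mem_walkEnds_dist_of_layerLE hE (hcomp v hv)⟩⟩
  have hends : ∀ l ∈ range h, #(ends l) ≤ D ^ h := by
    intro l hl
    have hdist : Nat.dist u.1 l ≤ h := by
      have := mem_range.1 hl
      unfold Nat.dist
      omega
    rw [card_product, card_singleton, one_mul]
    exact (card_walkEnds_le hD _ _).trans (Nat.pow_le_pow_right hDpos hdist)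
  simpa using (card_le_card hsub).trans (card_biUnion_le_card_mul _ _ _ hends)

theorem exists_layerLE_of_level [Fintype α] (hE : ∀ x y, y ∈ E x → x ∈ E y)
    (hdouble : IsDoubling E q) (hq : Fintype.card α < 4 * q) {A B : Finset (ℕ × α)} {s : ℕ}
    (hA : Fintype.card α < #{a ∈ A | a.1 ≤ s}) (hB : Fintype.card α < #{b ∈ B | s ≤ b.1}) :
    ∃ a ∈ A, ∃ b ∈ B, LayerLE E a b := by
  let up := {a ∈ A | a.1 ≤ s}.image fun a => (s - a.1, a.2)
  let down := {b ∈ B | s ≤ b.1}.image fun b => (b.1 - s, b.2)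
  have hup : #up = #{a ∈ A | a.1 ≤ s} := card_image_of_injOn fun a ha a' ha' h => by
    have has := (mem_filter.1 ha).2
    have has' := (mem_filter.1 ha').2
    obtain ⟨h₁, h₂⟩ := Prod.mk.inj h
    exact Prod.ext (by omega) h₂
  have hdown : #down = #{b ∈ B | s ≤ b.1} := card_image_of_injOn fun b hb b' hb' h => by
    have hsb := (mem_filter.1 hb).2
    have hsb' := (mem_filter.1 hb').2
    obtain ⟨h₁, h₂⟩ := Prod.mk.inj h
    exact Prod.ext (by omega) h₂
  have hV := hdouble.card_lt_two_mul_card_biUnion_walkEnds hq up (hup ▸ hA)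
  have hW := hdouble.card_lt_two_mul_card_biUnion_walkEnds hq down (hdown ▸ hB)
  obtain ⟨w, hw⟩ := inter_nonempty_of_card_lt_card_add_card
    (subset_univ (up.biUnion fun a => walkEnds E a.1 a.2))
    (subset_univ (down.biUnion fun b => walkEnds E b.1 b.2)) (by rw [card_univ]; omega)
  simp only [mem_inter, mem_biUnion, up, down, mem_image, mem_filter] at hw
  obtain ⟨⟨_, ⟨a, ⟨ha, has⟩, rfl⟩, haw⟩, ⟨_, ⟨b, ⟨hb, hsb⟩, rfl⟩, hbw⟩⟩ := hw
  refine ⟨a, ha, b, hb, has.trans hsb, ?_⟩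
  have hab := walkEnds_trans haw (walkEnds_symm hE hbw)
  rwa [add_comm, Nat.sub_add_sub_cancel hsb has] at hab

theorem exists_layerLE_of_card [Fintype α] (hE : ∀ x y, y ∈ E x → x ∈ E y)
    (hdouble : IsDoubling E q) (hq : Fintype.card α < 4 * q) {A B : Finset (ℕ × α)}
    (hA : 2 * (Fintype.card α + 1) ≤ #A) (hB : 2 * (Fintype.card α + 1) ≤ #B) :
    ∃ a ∈ A, ∃ b ∈ B, LayerLE E a b ∨ LayerLE E b a := by
  obtain ⟨s, hAs, hsA⟩ := exists_le_card_filter_le_and_ge Prod.fst (card_pos.1 (by omega)) hA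
  obtain ⟨t, hBt, htB⟩ := exists_le_card_filter_le_and_ge Prod.fst (card_pos.1 (by omega)) hB
  rcases le_total s t with hst | hts
  · obtain ⟨a, ha, b, hb, hab⟩ := exists_layerLE_of_level hE hdouble hq hAs
      (htB.trans (card_le_card (monotone_filter_right B fun b _ h => hst.trans h)))
    exact ⟨a, ha, b, hb, Or.inl hab⟩
  · obtain ⟨b, hb, a, ha, hba⟩ := exists_layerLE_of_level hE hdouble hq hBt
      (hsA.trans (card_le_card (monotone_filter_right A fun a _ h => hts.trans h)))
    exact ⟨a, ha, b, hb, Or.inr hba⟩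

end LayerOrder

section Cliques

variable {V : Type*} {G : SimpleGraph V} [DecidableRel G.Adj] {B : Finset V} {Δ : ℕ}

/-- The cliques of `G` with `i` vertices, all of them in `B`. -/
def cliquesIn [DecidableEq V] (G : SimpleGraph V) [DecidableRel G.Adj] (B : Finset V) (i : ℕ) :
    Finset (Finset V) :=
  (B.powersetCard i).filter fun s => G.IsClique s

theorem mem_cliquesIn [DecidableEq V] {i : ℕ} {s : Finset V} :
    s ∈ cliquesIn G B i ↔ s ⊆ B ∧ #s = i ∧ G.IsClique s := by
  rw [cliquesIn, mem_filter, mem_powersetCard, and_assoc]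

theorem card_cliquesIn_mul_sub_le_card_cliquesIn_succ_mul [DecidableEq V]
    (hΔ : ∀ u ∈ B, #{v ∈ B | ¬ G.Adj u v} ≤ Δ) (i : ℕ) :
    #(cliquesIn G B i) * (#B - i * Δ) ≤
      #(cliquesIn G B (i + 1)) * (i + 1) := by
  refine card_mul_le_card_mul (· ⊆ ·) (fun s hs => ?_) fun t ht => ?_
  · obtain ⟨hsB, hsi, hclique⟩ := mem_cliquesIn.1 hs
    let N := s.biUnion fun u => {v ∈ B | ¬ G.Adj u v}
    have hsN : s ⊆ N := fun u hu => mem_biUnion.2 ⟨u, hu, mem_filter.2 ⟨hsB hu, G.irrefl⟩⟩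
    have hN : #N ≤ i * Δ := hsi ▸ card_biUnion_le_card_mul _ _ _ fun u hu => hΔ u (hsB hu)
    calc #B - i * Δ ≤ #(B \ N) := (Nat.sub_le_sub_left hN _).trans (le_card_sdiff _ _)
      _ ≤ _ := card_le_card_of_injOn (insert · s) (fun v hv => ?_) fun v hv w _ h => ?_
    · obtain ⟨hvB, hvN⟩ := mem_sdiff.1 hv
      have hadj : ∀ u ∈ s, G.Adj v u := fun u hu => by
        by_contra hvu
        exact hvN (mem_biUnion.2 ⟨u, hu, mem_filter.2 ⟨hvB, fun huv => hvu huv.symm⟩⟩)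
      refine mem_filter.2 ⟨mem_cliquesIn.2 ⟨insert_subset hvB hsB, ?_, ?_⟩, subset_insert v s⟩
      · rw [card_insert_of_notMem fun hvs => hvN (hsN hvs), hsi]
      · rw [coe_insert]
        exact hclique.insert fun u hu _ => hadj u hu
    · have hvs : v ∉ s := fun hvs => (mem_sdiff.1 hv).2 (hsN hvs)
      exact (insert_inj hvs).1 h
  · calc _ ≤ #(t.powersetCard i) := card_le_card fun s hs => by
            obtain ⟨hs, hst⟩ := mem_filter.1 hs
            exact mem_powersetCard.2 ⟨hst, (mem_cliquesIn.1 hs).2.1⟩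
      _ = i + 1 := by
            rw [card_powersetCard, (mem_cliquesIn.1 ht).2.1, Nat.choose_succ_self_right]

theorem card_sub_mul_pow_le_factorial_mul_cliqueCount [Fintype V]
    (hΔ : ∀ u ∈ B, #{v ∈ B | ¬ G.Adj u v} ≤ Δ) (r : ℕ) :
    (#B - r * Δ) ^ r ≤ r ! * cliqueCount G r := by
  classical
  have hcount : ∀ i ≤ r, (#B - r * Δ) ^ i ≤
      i ! * #(cliquesIn G B i) := by
    intro i hi
    induction i with
    | zero => simp [cliquesIn, filter_singleton]
    | succ i ih =>
      calc (#B - r * Δ) ^ (i + 1)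
          ≤ (i ! * #(cliquesIn G B i)) * (#B - i * Δ) := by
            rw [pow_succ]
            exact Nat.mul_le_mul (ih (by omega))
              (Nat.sub_le_sub_left (Nat.mul_le_mul_right _ (by omega)) _)
        _ ≤ i ! * (#(cliquesIn G B (i + 1)) * (i + 1)) := by
            rw [mul_assoc]
            exact Nat.mul_le_mul_left _ (card_cliquesIn_mul_sub_le_card_cliquesIn_succ_mul hΔ i)
        _ = _ := by rw [Nat.factorial_succ]; ring
  refine (hcount r le_rfl).trans (Nat.mul_le_mul_left _ ?_)
  rw [cliqueCount, ← Set.ncard_coe_finset]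
  refine Set.ncard_le_ncard (fun s hs => ?_) (Set.toFinite _)
  exact (mem_cliquesIn.1 (mem_coe.1 hs)).2

end Cliques

section MonotonePaths

theorem HasIndMonPath.mono {n : ℕ} {G : SimpleGraph (Fin n)} {m m' : ℕ} (h : HasIndMonPath G m)
    (hm : m' ≤ m) : HasIndMonPath G m' := by
  obtain ⟨v, hv, hadj⟩ := h
  exact ⟨v ∘ Fin.castLE hm, hv.comp (Fin.strictMono_castLE hm), fun i j => hadj _ _⟩

theorem not_hasIndMonPath_three_fromRel {n : ℕ} {r : Fin n → Fin n → Prop}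
    (htrans : ∀ u v w, r u v → r v w → r u w) (hle : ∀ u v, r u v → u ≤ v) :
    ¬ HasIndMonPath (SimpleGraph.fromRel r) 3 := by
  rintro ⟨v, hv, hadj⟩
  have hrel : ∀ i j, i < j → (SimpleGraph.fromRel r).Adj (v i) (v j) → r (v i) (v j) :=
    fun i j hij h => h.2.resolve_right fun hji => (hle _ _ hji).not_gt (hv hij)
  have h01 := hrel 0 1 (by decide) ((hadj 0 1).2 (by decide))
  have h12 := hrel 1 2 (by decide) ((hadj 1 2).2 (by decide))
  have h02 : (SimpleGraph.fromRel r).Adj (v 0) (v 2) :=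
    ⟨hv.injective.ne (by decide), Or.inl (htrans _ _ _ h01 h12)⟩
  exact absurd ((hadj 0 2).1 h02) (by decide)

end MonotonePaths

section LayerGraph

variable {V α : Type*} [DecidableEq α]

/-- The comparability graph of the layered order, carried over to `V` by an embedding of `V`
into `ℕ × α`. -/
def layerGraph (E : α → Finset α) (f : V ↪ ℕ × α) : SimpleGraph V :=
  SimpleGraph.fromRel fun u v => LayerLE E (f u) (f v)

variable {E : α → Finset α} {f : V ↪ ℕ × α} {q : ℕ}

theorem layerLE_or_of_not_compl_layerGraph_adj {u v : V} (h : ¬ (layerGraph E f)ᶜ.Adj u v) :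
    LayerLE E (f u) (f v) ∨ LayerLE E (f v) (f u) := by
  rcases eq_or_ne u v with rfl | huv
  · exact Or.inl ⟨le_rfl, by simp [walkEnds]⟩
  · rw [SimpleGraph.compl_adj, not_and, not_not] at h
    exact (h huv).2

theorem card_not_compl_layerGraph_adj_le (hE : ∀ x y, y ∈ E x → x ∈ E y) {D : ℕ}
    (hD : ∀ x, #(E x) ≤ D) (hDpos : 0 < D) [DecidableRel (layerGraph E f)ᶜ.Adj] {h : ℕ}
    {B : Finset V} (hB : ∀ v ∈ B, (f v).1 < h) {u : V} (hu : u ∈ B) :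
    #{v ∈ B | ¬ (layerGraph E f)ᶜ.Adj u v} ≤ h * D ^ h := by
  rw [← card_map f]
  refine card_le_of_forall_layerLE hE hD hDpos (hB u hu) ?_ ?_
  · simp only [mem_map, mem_filter]
    rintro _ ⟨v, ⟨hv, -⟩, rfl⟩
    exact hB v hv
  · simp only [mem_map, mem_filter]
    rintro _ ⟨v, ⟨-, hv⟩, rfl⟩
    exact layerLE_or_of_not_compl_layerGraph_adj hv

theorem sub_mul_pow_le_factorial_mul_cliqueCount_compl_layerGraph [Fintype V]
    (hE : ∀ x y, y ∈ E x → x ∈ E y) {D : ℕ} (hD : ∀ x, #(E x) ≤ D) (hDpos : 0 < D) {h : ℕ}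
    {B : Finset V} (hB : ∀ v ∈ B, (f v).1 < h) (r : ℕ) :
    (#B - r * (h * D ^ h)) ^ r ≤ r ! * cliqueCount (layerGraph E f)ᶜ r := by
  classical
  exact card_sub_mul_pow_le_factorial_mul_cliqueCount
    (fun _ => card_not_compl_layerGraph_adj_le hE hD hDpos hB) r

theorem not_containsBlowup_two_compl_layerGraph [Fintype α] (hE : ∀ x y, y ∈ E x → x ∈ E y)
    (hdouble : IsDoubling E q) (hq : Fintype.card α < 4 * q) {t : ℕ}
    (ht : 2 * (Fintype.card α + 1) ≤ t) : ¬ ContainsBlowup (layerGraph E f)ᶜ 2 t := by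
  rintro ⟨A, hcard, -, hadj⟩
  obtain ⟨_, ha, _, hb, hab⟩ := exists_layerLE_of_card hE hdouble hq (A := (A 0).map f)
    (B := (A 1).map f) (by rwa [card_map, hcard]) (by rwa [card_map, hcard])
  obtain ⟨u, hu, rfl⟩ := mem_map.1 ha
  obtain ⟨v, hv, rfl⟩ := mem_map.1 hb
  obtain ⟨huv, hnadj⟩ := (SimpleGraph.compl_adj _ _ _).1 (hadj 0 1 (by decide) u hu v hv)
  exact hnadj ⟨huv, hab⟩

end LayerGraph

section BlockEmbedding

variable {n m : ℕ} [NeZero m] {E : Fin m → Finset (Fin m)}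

/-- The enumeration of `n` vertices layer by layer, each layer having `m` points: vertex `v` lies on
level `v / m`, at position `v % m`. -/
def blockEmbedding (n m : ℕ) [NeZero m] : Fin n ↪ ℕ × Fin m :=
  Fin.valEmbedding.trans (Nat.divModEquiv m).toEmbedding

theorem le_of_layerLE_blockEmbedding {u v : Fin n}
    (huv : LayerLE E (blockEmbedding n m u) (blockEmbedding n m v)) : u ≤ v := by
  rcases huv.eq_or_fst_lt with heq | hlt
  · exact ((blockEmbedding n m).injective heq).le
  · exact le_of_not_ge fun hvu => hlt.not_ge (Nat.div_le_div_right hvu)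

theorem pow_le_factorial_mul_cliqueCount_compl_layerGraph_blockEmbedding
    (hE : ∀ x y, y ∈ E x → x ∈ E y) {D : ℕ} (hD : ∀ x, #(E x) ≤ D) (hDpos : 0 < D) {h r : ℕ}
    (hn : h * m ≤ n) (hsparse : 2 * (r * D ^ h) ≤ m) :
    (h * m) ^ r ≤ 2 ^ r * (r ! * cliqueCount (layerGraph E (blockEmbedding n m))ᶜ r) := by
  let B : Finset (Fin n) := {v | (v : ℕ) < h * m}
  have hBcard : #B = h * m := by rw [Fin.card_filter_val_lt, min_eq_right hn]
  have hB : ∀ v ∈ B, (blockEmbedding n m v).1 < h := fun v hv =>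
    (Nat.div_lt_iff_lt_mul (NeZero.pos m)).2 ((mem_filter_univ v).1 hv)
  have hhalf : h * m ≤ 2 * (#B - r * (h * D ^ h)) := by
    have := Nat.mul_le_mul_left h hsparse
    rw [show h * (2 * (r * D ^ h)) = 2 * (r * (h * D ^ h)) by ring] at this
    omega
  calc (h * m) ^ r ≤ 2 ^ r * (#B - r * (h * D ^ h)) ^ r := by
        rw [← mul_pow]
        exact Nat.pow_le_pow_left hhalf r
    _ ≤ _ := Nat.mul_le_mul_left _
        (sub_mul_pow_le_factorial_mul_cliqueCount_compl_layerGraph hE hD hDpos hB r)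

end BlockEmbedding

section Parameters

open Filter

theorem eventually_mul_sqrt_le_mul_div_log (C : ℝ) {c : ℝ} (hc : 0 < c) :
    ∀ᶠ n : ℕ in atTop, C * √n ≤ c * n / Real.log n := by
  have hlog : ∀ᶠ x : ℝ in atTop, |C| * Real.log x ≤ c * √x := by
    have := ((isLittleO_log_rpow_atTop one_half_pos).const_mul_left |C|).bound hc
    filter_upwards [this, eventually_ge_atTop 1] with x hx hx1
    rw [Real.sqrt_eq_rpow]
    rw [Real.norm_of_nonneg (mul_nonneg (abs_nonneg C) (Real.log_nonneg hx1)),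
      Real.norm_of_nonneg (by positivity)] at hx
    exact hx
  filter_upwards [tendsto_natCast_atTop_atTop.eventually hlog, eventually_gt_atTop 1] with n hn hn1
  have hpos : 0 < Real.log n := Real.log_pos (by exact_mod_cast hn1)
  rw [le_div_iff₀ hpos]
  calc C * √n * Real.log n ≤ |C| * Real.log n * √n := by
        rw [mul_right_comm]
        gcongr
        exact le_abs_self C
    _ ≤ c * √n * √n := by gcongr
    _ = c * n := by rw [mul_assoc, Real.mul_self_sqrt n.cast_nonneg]

theorem pow_floor_log_div_le_sqrt {D x : ℝ} (hD : 1 < D) (hx : 1 ≤ x) :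
    D ^ ⌊Real.log x / (2 * Real.log D)⌋₊ ≤ √x := by
  have hlogD : 0 < Real.log D := Real.log_pos hD
  have hlogx : 0 ≤ Real.log x := Real.log_nonneg hx
  refine (Real.log_le_log_iff (by positivity) (by positivity)).1 ?_
  rw [Real.log_pow, Real.log_sqrt (by positivity)]
  calc _ ≤ Real.log x / (2 * Real.log D) * Real.log D := by
        gcongr
        exact Nat.floor_le (by positivity)
    _ = Real.log x / 2 := by field_simp

theorem floor_mul_floor_le {a b : ℝ} (ha : 0 ≤ a) (hb : 0 ≤ b) :
    (⌊a⌋₊ * ⌊b⌋₊ : ℝ) ≤ a * b :=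
  mul_le_mul (Nat.floor_le ha) (Nat.floor_le hb) (Nat.cast_nonneg _) ha

theorem mul_div_four_le_floor_mul_floor {a b : ℝ} (ha : 1 ≤ a) (hb : 1 ≤ b) :
    a * b / 4 ≤ ⌊a⌋₊ * ⌊b⌋₊ :=
  calc a * b / 4 = a / 2 * (b / 2) := by ring
    _ ≤ ⌊a⌋₊ * ⌊b⌋₊ := mul_le_mul (Nat.div_two_lt_floor ha).le (Nat.div_two_lt_floor hb).le
        (by linarith) (Nat.cast_nonneg _)

theorem eventually_mul_sqrt_le_three_mul_floor (C : ℝ) {c : ℝ} (hc : 0 < c) :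
    ∀ᶠ n : ℕ in atTop, 8 ≤ c * n / Real.log n ∧ C * √n ≤ 3 * ⌊c * n / Real.log n / 8⌋₊ := by
  filter_upwards [eventually_mul_sqrt_le_mul_div_log (6 * |C| + 8) hc, eventually_ge_atTop 1]
    with n hy hn
  have hsqrt : 1 ≤ √(n : ℝ) := Real.one_le_sqrt.2 (by exact_mod_cast hn)
  have hC : C * √n ≤ |C| * √n := by gcongr; exact le_abs_self C
  have hCpos : 0 ≤ |C| * √n := by positivity
  have hy8 : 8 ≤ c * n / Real.log n := by linarith
  have hfloor := Nat.div_two_lt_floor (by linarith : 1 ≤ c * n / Real.log n / 8)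
  exact ⟨hy8, by linarith⟩

theorem two_mul_three_mul_floor_add_one_le_ceil {y : ℝ} (hy : 8 ≤ y) :
    2 * (3 * ⌊y / 8⌋₊ + 1) ≤ ⌈y⌉₊ := by
  have hfloor : (⌊y / 8⌋₊ : ℝ) ≤ y / 8 := Nat.floor_le (by positivity)
  have : ((2 * (3 * ⌊y / 8⌋₊ + 1) : ℕ) : ℝ) ≤ y := by push_cast; linarith
  exact_mod_cast this.trans (Nat.le_ceil y)

-- The layers have size `3 * q ≈ c * n / log n`, and there are `h ≈ log n` of them, few enough for
-- `D ^ h ≤ √n`.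
theorem exists_layer_parameters (r : ℕ) {D : ℕ} (hD : 1 < D) {c : ℝ} (hc : 0 < c) :
    ∃ κ : ℝ, 0 < κ ∧ ∀ᶠ n : ℕ in atTop, ∃ q h : ℕ, 0 < q ∧
      2 * (3 * q + 1) ≤ ⌈c * n / Real.log n⌉₊ ∧ h * (3 * q) ≤ n ∧
      κ * n ≤ h * (3 * q) ∧ 2 * (r * D ^ h) ≤ 3 * q := by
  have hDr : (1 : ℝ) < D := by exact_mod_cast hD
  have hlogD : 1 / 2 ≤ Real.log D := by
    have := Real.log_le_log two_pos (by exact_mod_cast hD : (2 : ℝ) ≤ D)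
    linarith [Real.log_two_gt_d9]
  let c' := min c 1
  have hc' : 0 < c' := lt_min hc one_pos
  refine ⟨3 * c' / (64 * Real.log D), by positivity, ?_⟩
  filter_upwards [eventually_mul_sqrt_le_three_mul_floor (2 * r) hc', eventually_gt_atTop 1,
    (Real.tendsto_log_atTop.comp tendsto_natCast_atTop_atTop).eventually_ge_atTop
      (2 * Real.log D)] with n ⟨hy, hsqrt⟩ hn hlogn
  have hn1 : (1 : ℝ) < n := by exact_mod_cast hn
  have hL : 0 < Real.log n := Real.log_pos hn1
  let a := Real.log n / (2 * Real.log D)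
  let b := c' * n / Real.log n / 8
  have hab : a * b = c' * n / (16 * Real.log D) := by simp only [a, b]; field_simp; norm_num
  have hle := floor_mul_floor_le (by positivity : 0 ≤ a) (by positivity : 0 ≤ b)
  have hge := mul_div_four_le_floor_mul_floor ((one_le_div₀ (by positivity)).2 hlogn : 1 ≤ a)
    (by simp only [b]; linarith : 1 ≤ b)
  rw [hab] at hle hge
  refine ⟨⌊b⌋₊, ⌊a⌋₊, Nat.floor_pos.2 (by simp only [b]; linarith), ?_, ?_, ?_, ?_⟩
  · refine (two_mul_three_mul_floor_add_one_le_ceil hy).trans (Nat.ceil_mono ?_)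
    gcongr
    exact min_le_left c 1
  · have : c' * n / (16 * Real.log D) ≤ 1 * n / (16 * (1 / 2)) := by
      gcongr
      exact min_le_right c 1
    exact_mod_cast (by push_cast; linarith : ((⌊a⌋₊ * (3 * ⌊b⌋₊) : ℕ) : ℝ) ≤ n)
  · calc _ = 3 * (c' * n / (16 * Real.log D) / 4) := by ring
      _ ≤ _ := by linarith
  · have : (2 * (r * D ^ ⌊a⌋₊) : ℝ) ≤ 3 * ⌊b⌋₊ := by
      refine le_trans ?_ hsqrt
      rw [mul_assoc]
      gcongr
      exact pow_floor_log_div_le_sqrt hDr hn1.le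
    exact_mod_cast this

end Parameters

theorem stmt_3_general (r : ℕ) {c : ℝ} (hc : 0 < c) :
    ∃ η : ℝ, 0 < η ∧ ∃ n₀ : ℕ, ∀ n : ℕ, n₀ ≤ n →
      ∃ G : SimpleGraph (Fin n),
        ¬ HasIndMonPath G 3 ∧
        η * (n : ℝ) ^ r ≤ (cliqueCount Gᶜ r : ℝ) ∧
        ¬ ContainsBlowup Gᶜ 2 ⌈c * (n : ℝ) / Real.log n⌉₊ := by
  obtain ⟨κ, hκ, hparam⟩ := exists_layer_parameters r (by norm_num : 1 < 26) hc
  obtain ⟨n₀, hn₀⟩ := Filter.eventually_atTop.1 hparam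
  refine ⟨κ ^ r / (2 ^ r * r !), by positivity, n₀, fun n hn => ?_⟩
  obtain ⟨q, h, hq, hceil, hhn, hκn, hsparse⟩ := hn₀ n hn
  obtain ⟨E, hE, hdeg, hdouble⟩ := exists_symmetric_isDoubling (Fin (3 * q))
  rw [Fintype.card_fin, Nat.mul_div_cancel_left _ three_pos] at hdouble
  have : NeZero (3 * q) := ⟨by omega⟩
  refine ⟨layerGraph E (blockEmbedding n (3 * q)),
    not_hasIndMonPath_three_fromRel (fun _ _ _ => LayerLE.trans)
      (fun _ _ => le_of_layerLE_blockEmbedding), ?_,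
    not_containsBlowup_two_compl_layerGraph hE hdouble (by rw [Fintype.card_fin]; omega)
      (by rwa [Fintype.card_fin])⟩
  have hcount := pow_le_factorial_mul_cliqueCount_compl_layerGraph_blockEmbedding hE hdeg
    (by norm_num) hhn hsparse
  rw [div_mul_eq_mul_div, div_le_iff₀' (by positivity), ← mul_pow, mul_assoc]
  calc (κ * n) ^ r ≤ (h * (3 * q)) ^ r := pow_le_pow_left₀ (by positivity) hκn r
    _ ≤ _ := by exact_mod_cast hcount

theorem stmt_3 (k : ℕ) (hk : 3 ≤ k) (c : ℝ) (hc : 0 < c) :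
    ∃ η : ℝ, 0 < η ∧ ∃ n₀ : ℕ, ∀ n : ℕ, n₀ ≤ n →
      ∃ G : SimpleGraph (Fin n),
        ¬ HasIndMonPath G (2 * k - 1) ∧
        η * (n : ℝ) ^ (k ^ 2 / 4) ≤ (cliqueCount Gᶜ (k ^ 2 / 4) : ℝ) ∧
        ¬ ContainsBlowup Gᶜ 2 ⌈c * (n : ℝ) / Real.log n⌉₊ := by
  obtain ⟨η, hη, n₀, h⟩ := stmt_3_general (k ^ 2 / 4) hc
  exact ⟨η, hη, n₀, fun n hn => (h n hn).imp fun _ => And.imp_left (mt (.mono · (by omega)))⟩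
end
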